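/- Upper bound on Dirichlet boundary-crossing probabilities for all thresholds: Let m ≥ 1, b > 0, and let f : {0,…,m} → [0,b] satisfy f(0) = 0 and f(m) = b. Let α = (α_0,…,α_m) ∈ ℝ_{>0}^{m+1}, set ᾱ = Σ_{j=0}^m α_j and p̄(ℓ) = α_ℓ/ᾱ for ℓ = 0,…,m. Fix ε ∈ (0,1) and assume min(α_0, α_m) ≥ c₀·ε^{−2}. Define α⁻ = (α_0 + 1, α_1, …, α_{m−1}, α_m). Then for every μ ∈ (0, b), P_{w ∼ Dir(α⁻)}( wf ≥ μ ) ≤ (1 + ε) · P_{ζ ∼ N(0,1)}( ζ ≥ √ᾱ · A(p̄, μ, f) ). -/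

import Mathlib

open MeasureTheory ProbabilityTheory Real Set
open scoped ENNReal

noncomputable section

/-- The absolute constant `c₀ = (2/π)(8 + 49√6/9)²`. -/
def c0 : ℝ := (2 / Real.pi) * (8 + 49 * Real.sqrt 6 / 9) ^ 2

/-- Unnormalized density of `Dir(α)` in the first `m` coordinates. -/
def dirichletDensity (m : ℕ) (α : Fin (m + 1) → ℝ) : (Fin m → ℝ) → ℝ :=
  Set.indicator {x | (∀ i, 0 ≤ x i) ∧ ∑ i, x i ≤ 1}
    (fun x => (∏ i : Fin m, x i ^ (α i.castSucc - 1)) * (1 - ∑ i, x i) ^ (α (Fin.last m) - 1))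

def dirichletBase (m : ℕ) (α : Fin (m + 1) → ℝ) : Measure (Fin m → ℝ) :=
  volume.withDensity fun x => ENNReal.ofReal (dirichletDensity m α x)

/-- The Dirichlet distribution `Dir(α)`, as the law of the vector
`(x₀, …, x_{m-1}, 1 - ∑ x_i)` on the simplex `Δ_m ⊆ ℝ^{m+1}`. -/
def dirichlet (m : ℕ) (α : Fin (m + 1) → ℝ) : Measure (Fin (m + 1) → ℝ) :=
  Measure.map (fun x : Fin m → ℝ => Fin.snoc x (1 - ∑ i, x i))
    ((dirichletBase m α Set.univ)⁻¹ • dirichletBase m α)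

/-- Kullback–Leibler divergence between finitely supported `p, q` (for `p ≪ q`). -/
def klReal {m : ℕ} (p q : Fin (m + 1) → ℝ) : ℝ :=
  ∑ i, if p i = 0 then 0 else p i * Real.log (p i / q i)

/-- `Kinf(p, μ, f) = inf { KL(p,q) : q ∈ Δ_m, qf ≥ μ }`. -/
def Kinf {m : ℕ} (p : Fin (m + 1) → ℝ) (μ : ℝ) (f : Fin (m + 1) → ℝ) : ℝ :=
  sInf {x | ∃ q ∈ stdSimplex ℝ (Fin (m + 1)),
    (∀ i, q i = 0 → p i = 0) ∧ μ ≤ ∑ i, f i * q i ∧ x = klReal p q}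

/-- `Kinf*(p, μ, f) = inf { KL(p,q) : q ∈ Δ_m, qf = μ }`. -/
def Kinfstar {m : ℕ} (p : Fin (m + 1) → ℝ) (μ : ℝ) (f : Fin (m + 1) → ℝ) : ℝ :=
  sInf {x | ∃ q ∈ stdSimplex ℝ (Fin (m + 1)),
    (∀ i, q i = 0 → p i = 0) ∧ (∑ i, f i * q i) = μ ∧ x = klReal p q}

/-- `A(p, μ, f) = sgn(μ - pf) √(2 Kinf*(p, μ, f))`. -/
def Afun {m : ℕ} (p : Fin (m + 1) → ℝ) (μ : ℝ) (f : Fin (m + 1) → ℝ) : ℝ :=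
  Real.sign (μ - ∑ ℓ, f ℓ * p ℓ) * Real.sqrt (2 * Kinfstar p μ f)



def psiF {ι : Type*} [Fintype ι] (α a : ι → ℝ) (t : ℝ) : ℂ :=
  Complex.exp (-∑ j, (α j : ℂ) * Complex.log (1 - (t * a j : ℝ) * Complex.I))

lemma one_sub_mem_slit (x : ℝ) : (1 - (x : ℂ) * Complex.I) ∈ Complex.slitPlane := by
  left; simp

lemma one_sub_ne (x : ℝ) : (1 - (x : ℂ) * Complex.I) ≠ 0 :=
  Complex.slitPlane_ne_zero (one_sub_mem_slit x)

lemma norm_one_sub (x : ℝ) : ‖(1 - (x : ℂ) * Complex.I)‖ = Real.sqrt (1 + x ^ 2) := by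
  rw [Complex.norm_def, Complex.normSq_apply]
  congr 1
  simp; ring

lemma one_le_norm_one_sub (x : ℝ) : 1 ≤ ‖(1 - (x : ℂ) * Complex.I)‖ := by
  rw [norm_one_sub]; exact Real.one_le_sqrt.mpr (by nlinarith [sq_nonneg x])

lemma psiF_norm {ι : Type*} [Fintype ι] (α a : ι → ℝ) (t : ℝ) :
    ‖psiF α a t‖ = Real.exp (-∑ j, α j / 2 * Real.log (1 + (t * a j) ^ 2)) := by
  unfold psiF
  rw [Complex.norm_exp]
  congr 1
  rw [Complex.neg_re, Complex.re_sum]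
  congr 1
  refine Finset.sum_congr rfl fun j _ => ?_
  rw [Complex.re_ofReal_mul, Complex.log_re, norm_one_sub, Real.log_sqrt (by positivity)]
  ring

lemma psiF_deriv {ι : Type*} [Fintype ι] (α a : ι → ℝ) (t : ℝ) :
    HasDerivAt (psiF α a)
      (psiF α a t * ∑ j, (α j : ℂ) * ((a j * Complex.I) / (1 - (t * a j : ℝ) * Complex.I))) t := by
  unfold psiF
  apply HasDerivAt.cexp
  have h : ∀ j ∈ (Finset.univ : Finset ι), HasDerivAt (fun t : ℝ => -((α j : ℂ) * Complex.log (1 - (t * a j : ℝ) * Complex.I)))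
      ((α j : ℂ) * ((a j * Complex.I) / (1 - (t * a j : ℝ) * Complex.I))) t := by
    intro j _
    have h1 : HasDerivAt (fun t : ℝ => (1 - ((t * a j : ℝ) : ℂ) * Complex.I)) (-(a j * Complex.I)) t := by
      have : HasDerivAt (fun t : ℝ => ((t * a j : ℝ) : ℂ)) (a j : ℂ) t := by
        have := ((hasDerivAt_id t).mul_const (a j)).ofReal_comp
        simpa using this
      simpa using (this.mul_const Complex.I).const_sub 1
    have h2 := h1.clog_real (one_sub_mem_slit _)
    have h3 := (h2.const_mul (α j : ℂ)).neg
    exact h3.congr_deriv (by ring)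
  have := HasDerivAt.fun_sum h
  simpa only [Finset.sum_neg_distrib] using this

lemma psiF_zero {ι : Type*} [Fintype ι] (α a : ι → ℝ) : psiF α a 0 = 1 := by
  simp [psiF]

lemma psiF_neg {ι : Type*} [Fintype ι] (α a : ι → ℝ) (t : ℝ) :
    psiF α a (-t) = psiF α (fun j => - a j) t := by
  simp [psiF]

/-- norm monotonicity -/
lemma psiF_norm_mono {ι : Type*} [Fintype ι] (α a : ι → ℝ) (hα : ∀ j, 0 ≤ α j)
    (ha2 : ∑ j, α j * a j ^ 2 = 1) (s t : ℝ) (hs : 0 ≤ s) (hst : s ≤ t) :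
    ‖psiF α a s‖ * Real.exp (s ^ 2 / 2) ≤ ‖psiF α a t‖ * Real.exp (t ^ 2 / 2) := by
  rw [psiF_norm, psiF_norm, ← Real.exp_add, ← Real.exp_add, Real.exp_le_exp]
  have e : ∀ t : ℝ, -∑ j, α j / 2 * Real.log (1 + (t * a j) ^ 2) + t ^ 2 / 2
      = ∑ j, α j / 2 * ((t * a j) ^ 2 - Real.log (1 + (t * a j) ^ 2)) := by
    intro t
    have : t ^ 2 / 2 = ∑ j, α j / 2 * (t * a j) ^ 2 := by
      calc t ^ 2 / 2 = t ^ 2 / 2 * ∑ j, α j * a j ^ 2 := by rw [ha2, mul_one]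
        _ = _ := by rw [Finset.mul_sum]; exact Finset.sum_congr rfl fun j _ => by ring
    rw [this, ← Finset.sum_neg_distrib, ← Finset.sum_add_distrib]
    exact Finset.sum_congr rfl fun j _ => by ring
  rw [e, e]
  refine Finset.sum_le_sum fun j _ => mul_le_mul_of_nonneg_left ?_ (by linarith [hα j])
  have hx : (s * a j) ^ 2 ≤ (t * a j) ^ 2 := by
    rw [mul_pow, mul_pow]
    exact mul_le_mul_of_nonneg_right (by nlinarith) (sq_nonneg _)
  set x := (s * a j) ^ 2 with hxd
  set y := (t * a j) ^ 2
  have hx0 : 0 ≤ x := sq_nonneg _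
  have h1 : Real.log ((1 + y) / (1 + x)) ≤ (1 + y) / (1 + x) - 1 :=
    Real.log_le_sub_one_of_pos (by positivity)
  rw [Real.log_div (by positivity) (by positivity)] at h1
  have h2 : (1 + y) / (1 + x) - 1 ≤ y - x := by
    rw [div_sub_one (by positivity), div_le_iff₀ (by positivity)]
    nlinarith
  linarith

lemma psiF_norm_le {ι : Type*} [Fintype ι] (α a : ι → ℝ) (hα : ∀ j, 0 ≤ α j)
    (ha2 : ∑ j, α j * a j ^ 2 = 1) (hs : ∀ j, a j ^ 2 ≤ 1 / 6) (t : ℝ) :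
    ‖psiF α a t‖ ≤ ((1 + t ^ 2 / 6) ^ 3)⁻¹ := by
  rw [psiF_norm]
  have hp : 0 < 1 + t ^ 2 / 6 := by positivity
  have : ((1 + t ^ 2 / 6) ^ 3)⁻¹ = Real.exp (- (3 * Real.log (1 + t ^ 2 / 6))) := by
    rw [Real.exp_neg, ← Real.rpow_natCast, Real.rpow_def_of_pos hp]
    congr 2; push_cast; ring
  rw [this, Real.exp_le_exp, neg_le_neg_iff]
  calc 3 * Real.log (1 + t ^ 2 / 6) = ∑ j, α j / 2 * (6 * a j ^ 2 * Real.log (1 + t ^ 2 / 6)) := by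
        have : 3 * Real.log (1 + t ^ 2 / 6) = 3 * Real.log (1 + t ^ 2 / 6) * ∑ j, α j * a j ^ 2 := by
          rw [ha2, mul_one]
        rw [this, Finset.mul_sum]; exact Finset.sum_congr rfl fun j _ => by ring
    _ ≤ _ := by
        refine Finset.sum_le_sum fun j _ => mul_le_mul_of_nonneg_left ?_ (by linarith [hα j])
        rw [← Real.log_rpow hp]
        apply Real.log_le_log (by positivity)
        have := rpow_one_add_le_one_add_mul_self (s := t ^ 2 / 6) (by nlinarith [sq_nonneg t])
          (p := 6 * a j ^ 2) (by positivity) (by linarith [hs j])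
        refine this.trans (le_of_eq (by ring))

lemma psiF_sub_gauss_nonneg {ι : Type*} [Fintype ι] (α a : ι → ℝ) (hα : ∀ j, 0 ≤ α j)
    (ha1 : ∑ j, α j * a j = 0)
    (ha2 : ∑ j, α j * a j ^ 2 = 1) (η : ℝ) (hη : ∀ j, |a j| ≤ η) (t : ℝ) (ht : 0 ≤ t) :
    ‖psiF α a t - Real.exp (-t ^ 2 / 2)‖ ≤ η * t ^ 3 / 3 * ‖psiF α a t‖ := by
  set F : ℝ → ℂ := fun s => psiF α a s * Complex.exp ((s ^ 2 / 2 : ℝ)) with hF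
  have hnF : ∀ s, ‖F s‖ = ‖psiF α a s‖ * Real.exp (s ^ 2 / 2) := by
    intro s; rw [hF]; simp only [norm_mul, Complex.norm_exp_ofReal]
  set D : ℝ → ℂ := fun s => F s * ∑ j, (α j : ℂ) * (a j ^ 2 * s * (-(s * a j : ℝ) * Complex.I / (1 - (s * a j : ℝ) * Complex.I))) with hD
  have hder : ∀ s, HasDerivAt F (D s) s := by
    intro s
    have h1 := psiF_deriv α a s
    have h2 : HasDerivAt (fun s : ℝ => Complex.exp ((s ^ 2 / 2 : ℝ) : ℂ)) (Complex.exp ((s ^ 2 / 2 : ℝ) : ℂ) * (s : ℂ)) s := by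
      apply HasDerivAt.cexp
      have h0 : HasDerivAt (fun s : ℝ => s ^ 2 / 2) s s :=
        (((hasDerivAt_id' s).fun_pow 2).div_const 2).congr_deriv (by simp)
      exact h0.ofReal_comp
    have h3 := h1.fun_mul h2
    refine h3.congr_deriv ?_
    rw [hD, hF]
    have key : (s : ℂ) = ∑ j, (α j : ℂ) * (a j ^ 2 * s - a j * Complex.I) := by
      have e1 : ∑ j, (α j : ℂ) * (a j ^ 2 * s - a j * Complex.I) = ((∑ j, α j * a j ^ 2 : ℝ) : ℂ) * s - ((∑ j, α j * a j : ℝ) : ℂ) * Complex.I := by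
        push_cast
        rw [Finset.sum_mul, Finset.sum_mul, ← Finset.sum_sub_distrib]
        exact Finset.sum_congr rfl fun j _ => by ring
      rw [e1, ha1, ha2]; simp
    have : ∑ j, (α j : ℂ) * (a j ^ 2 * s * (-(s * a j : ℝ) * Complex.I / (1 - (s * a j : ℝ) * Complex.I)))
       = ∑ j, (α j : ℂ) * ((a j * Complex.I) / (1 - (s * a j : ℝ) * Complex.I)) + s := by
      conv_rhs => rw [key]
      rw [← Finset.sum_add_distrib]
      refine Finset.sum_congr rfl fun j _ => ?_
      have := one_sub_ne (s * a j)
      rw [← mul_add]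
      congr 1
      field_simp
      push_cast
      ring_nf
      simp only [Complex.I_sq]
      ring
    simp only
    rw [this]
    ring
  have hbound : ‖F t - 1‖ ≤ η * t ^ 3 / 3 * ‖F t‖ := by
    have hf0 : F 0 = 1 := by simp [hF, psiF_zero]
    have := image_norm_le_of_norm_deriv_right_le_deriv_boundary (f := fun s => F s - 1) (f' := D)
      (a := 0) (b := t) (B := fun s => η * s ^ 3 / 3 * ‖F t‖) (B' := fun s => η * s ^ 2 * ‖F t‖)
      ?_ ?_ ?_ ?_ ?_ (x := t) ⟨ht, le_refl _⟩
    · exact this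
    · exact fun s _ => ((hder s).continuousAt.sub continuousAt_const).continuousWithinAt
    · exact fun s _ => ((hder s).sub_const 1).hasDerivWithinAt
    · simp [hf0]
    · intro s
      have := (((hasDerivAt_id' s).fun_pow 3).const_mul η).div_const 3 |>.mul_const ‖F t‖
      exact this.congr_deriv (by push_cast; ring)
    · intro s hs
      rw [hD]
      simp only [norm_mul]
      have hm : ‖F s‖ ≤ ‖F t‖ := by
        rw [hnF, hnF]; exact psiF_norm_mono α a hα ha2 s t hs.1 hs.2.le
      have : ‖∑ j, (α j : ℂ) * (a j ^ 2 * s * (-(s * a j : ℝ) * Complex.I / (1 - (s * a j : ℝ) * Complex.I)))‖ ≤ η * s ^ 2 := by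
        calc _ ≤ ∑ j, α j * a j ^ 2 * (η * s ^ 2) := by
              refine norm_sum_le_of_le _ fun j _ => ?_
              rw [norm_mul, norm_mul, norm_mul, norm_div, norm_mul, norm_neg]
              simp only [Complex.norm_I, Complex.norm_real, mul_one, norm_pow, Real.norm_eq_abs, sq_abs]
              rw [abs_of_nonneg (hα j), abs_of_nonneg hs.1, mul_assoc (α j)]
              refine mul_le_mul_of_nonneg_left ?_ (hα j)
              rw [mul_assoc]
              refine mul_le_mul_of_nonneg_left ?_ (sq_nonneg _)
              have h1 : |s * a j| / ‖(1 - (s * a j : ℝ) * Complex.I)‖ ≤ |s * a j| :=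
                div_le_self (abs_nonneg _) (one_le_norm_one_sub _)
              have h2 : |s * a j| ≤ s * η := by
                rw [abs_mul, abs_of_nonneg hs.1]; exact mul_le_mul_of_nonneg_left (hη j) hs.1
              calc _ ≤ s * (s * η) := mul_le_mul_of_nonneg_left (h1.trans h2) hs.1
                _ = _ := by ring
          _ = _ := by rw [← Finset.sum_mul, ha2, one_mul]
      rw [mul_comm]
      have h0 : 0 ≤ η * s ^ 2 := (norm_nonneg _).trans this
      gcongr
  have hE : (Real.exp (t ^ 2 / 2)) * Real.exp (-t ^ 2 / 2) = 1 := by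
    rw [← Real.exp_add]; ring_nf; simp
  have e : psiF α a t - Real.exp (-t ^ 2 / 2) = (F t - 1) * (Real.exp (-t ^ 2 / 2) : ℝ) := by
    rw [hF]
    simp only
    rw [sub_mul, mul_assoc, ← Complex.ofReal_exp, ← Complex.ofReal_mul, hE]
    simp
  rw [e, norm_mul, Complex.norm_real, Real.norm_of_nonneg (Real.exp_pos _).le]
  calc _ ≤ (η * t ^ 3 / 3 * ‖F t‖) * Real.exp (-t ^ 2 / 2) := by gcongr
    _ = η * t ^ 3 / 3 * ‖psiF α a t‖ * (Real.exp (t ^ 2 / 2) * Real.exp (-t ^ 2 / 2)) := by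
        rw [hnF]; ring
    _ = _ := by rw [hE, mul_one]

lemma psiF_sub_gauss {ι : Type*} [Fintype ι] (α a : ι → ℝ) (hα : ∀ j, 0 ≤ α j)
    (ha1 : ∑ j, α j * a j = 0)
    (ha2 : ∑ j, α j * a j ^ 2 = 1) (η : ℝ) (hη : ∀ j, |a j| ≤ η) (t : ℝ) :
    ‖psiF α a t - Real.exp (-t ^ 2 / 2)‖ ≤ η * |t| ^ 3 / 3 * ‖psiF α a t‖ := by
  rcases le_total 0 t with ht | ht
  · rw [abs_of_nonneg ht]; exact psiF_sub_gauss_nonneg α a hα ha1 ha2 η hη t ht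
  · have := psiF_sub_gauss_nonneg α (fun j => - a j) hα (by simp [ha1]) (by simpa using ha2) η
      (by simpa using hη) (-t) (by linarith)
    rw [← psiF_neg] at this
    rw [abs_of_nonpos ht]
    simpa using this

lemma psiF_cont {ι : Type*} [Fintype ι] (α a : ι → ℝ) : Continuous (psiF α a) :=
  continuous_iff_continuousAt.mpr fun t => (psiF_deriv α a t).continuousAt

lemma poly_bd (t : ℝ) (ht : 0 ≤ t) :
    (t + t ^ 3 / 3) * ((1 + t ^ 2 / 6) ^ 3)⁻¹ ≤ 12 * (1 + t ^ 2)⁻¹ := by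
  rw [← div_eq_mul_inv, ← div_eq_mul_inv, div_le_div_iff₀ (by positivity) (by positivity)]
  nlinarith [mul_nonneg ht (sq_nonneg (t^2-3*t)), sq_nonneg (t-1), sq_nonneg (t^3-3*t^2), sq_nonneg (t^3-4*t^2), sq_nonneg (t^3-5*t^2), sq_nonneg (t^2-3*t), sq_nonneg (t^2-2*t), sq_nonneg (t ^ 3 - 6 * t^2 + t)]

def Iint {ι : Type*} [Fintype ι] (α a : ι → ℝ) (a0 : ℝ) : ℂ :=
  ∫ t : ℝ, (1 - (t * a0 : ℝ) * Complex.I)⁻¹ * psiF α a t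

lemma Iint_bound {ι : Type*} [Fintype ι] (α a : ι → ℝ) (hα : ∀ j, 0 ≤ α j)
    (ha1 : ∑ j, α j * a j = 0)
    (ha2 : ∑ j, α j * a j ^ 2 = 1) (η : ℝ) (hη6 : η ≤ 1 / 16) (hη : ∀ j, |a j| ≤ η)
    (a0 : ℝ) (ha0 : |a0| ≤ η) :
    ‖Iint α a a0 - Real.sqrt (2 * π)‖ ≤ 12 * π * η := by
  have hη0 : 0 ≤ η := (abs_nonneg _).trans ha0
  have hs : ∀ j, a j ^ 2 ≤ 1 / 6 := fun j => by
    rw [← sq_abs]; nlinarith [abs_nonneg (a j), hη j]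
  have hgi : Integrable (fun t : ℝ => Real.exp (-t ^ 2 / 2)) := by
    have := integrable_exp_neg_mul_sq (b := 1/2) (by norm_num)
    convert this using 3; ring
  have hg : ∫ t : ℝ, ((Real.exp (-t ^ 2 / 2) : ℝ) : ℂ) = Real.sqrt (2 * π) := by
    rw [integral_complex_ofReal]
    have := integral_gaussian (1/2)
    congr 1
    rw [show (2 * π) = π / (1/2) by ring, ← this]
    congr 1; ext t; congr 1; ring
  have hpt : ∀ t : ℝ, ‖(1 - (t * a0 : ℝ) * Complex.I)⁻¹ * psiF α a t - (Real.exp (-t ^ 2 / 2) : ℝ)‖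
      ≤ 12 * η * (1 + t ^ 2)⁻¹ := by
    intro t
    have e : (1 - (t * a0 : ℝ) * Complex.I)⁻¹ * psiF α a t - (Real.exp (-t ^ 2 / 2) : ℝ)
       = ((t * a0 : ℝ) * Complex.I) * (1 - (t * a0 : ℝ) * Complex.I)⁻¹ * psiF α a t + (psiF α a t - (Real.exp (-t ^ 2 / 2) : ℝ)) := by
      have := one_sub_ne (t * a0)
      field_simp
      ring
    rw [e]
    refine (norm_add_le _ _).trans ?_
    have h1 : ‖((t * a0 : ℝ) * Complex.I) * (1 - (t * a0 : ℝ) * Complex.I)⁻¹ * psiF α a t‖ ≤ η * |t| * ‖psiF α a t‖ := by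
      rw [norm_mul, norm_mul, norm_mul, norm_inv, Complex.norm_I, mul_one, Complex.norm_real, Real.norm_eq_abs, abs_mul]
      refine mul_le_mul_of_nonneg_right ?_ (norm_nonneg _)
      calc _ ≤ |t| * |a0| * 1 := by
            gcongr
            exact inv_le_one_of_one_le₀ (one_le_norm_one_sub _)
        _ ≤ _ := by nlinarith [abs_nonneg t]
    have h2 := psiF_sub_gauss α a hα ha1 ha2 η hη t
    have h3 := psiF_norm_le α a hα ha2 hs t
    have h4 := poly_bd |t| (abs_nonneg t)
    rw [sq_abs] at h4
    calc _ ≤ η * ((|t| + |t| ^ 3 / 3) * ‖psiF α a t‖) := by linarith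
      _ ≤ η * ((|t| + |t| ^ 3 / 3) * ((1 + t ^ 2 / 6) ^ 3)⁻¹) := by gcongr
      _ ≤ η * (12 * (1 + t ^ 2)⁻¹) := by gcongr
      _ = _ := by ring
  have hcont : Continuous (fun t : ℝ => (1 - (t * a0 : ℝ) * Complex.I)⁻¹ * psiF α a t - (Real.exp (-t ^ 2 / 2) : ℝ)) := by
    refine Continuous.sub (Continuous.mul (Continuous.inv₀ (by fun_prop) fun t => one_sub_ne _) (psiF_cont α a)) (by fun_prop)
  have hbi : Integrable (fun t : ℝ => 12 * η * (1 + t ^ 2)⁻¹) := integrable_inv_one_add_sq.const_mul _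
  have hdi : Integrable (fun t : ℝ => (1 - (t * a0 : ℝ) * Complex.I)⁻¹ * psiF α a t - (Real.exp (-t ^ 2 / 2) : ℝ)) :=
    hbi.mono' hcont.aestronglyMeasurable (Filter.Eventually.of_forall hpt)
  have hsplit : Iint α a a0 - Real.sqrt (2 * π) = ∫ t : ℝ, ((1 - (t * a0 : ℝ) * Complex.I)⁻¹ * psiF α a t - (Real.exp (-t ^ 2 / 2) : ℝ)) := by
    have hfi : Integrable (fun t : ℝ => (1 - (t * a0 : ℝ) * Complex.I)⁻¹ * psiF α a t) := by
      have := hdi.add (hgi.ofReal (𝕜 := ℂ))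
      refine this.congr (Filter.Eventually.of_forall fun t => ?_)
      simp
    have hgi' : Integrable (fun t : ℝ => ((Real.exp (-t ^ 2 / 2) : ℝ) : ℂ)) := hgi.ofReal
    rw [integral_sub hfi hgi', hg]
    rfl
  rw [hsplit]
  calc _ ≤ ∫ t : ℝ, 12 * η * (1 + t ^ 2)⁻¹ := norm_integral_le_of_norm_le hbi (Filter.Eventually.of_forall hpt)
    _ = _ := by rw [integral_const_mul, integral_univ_inv_one_add_sq]; ring



def zf {ι : Type*} (f : ι → ℝ) (κ : ℝ) (j : ι) : ℝ := f j / (1 - κ * f j)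
def Nf {ι : Type*} [Fintype ι] (p f : ι → ℝ) (κ : ℝ) : ℝ := ∑ j, p j * zf f κ j
def Mf {ι : Type*} [Fintype ι] (p f : ι → ℝ) (κ : ℝ) : ℝ := 1 + κ * Nf p f κ
def Vf {ι : Type*} [Fintype ι] (p f : ι → ℝ) (κ : ℝ) : ℝ := ∑ j, p j * zf f κ j ^ 2 - Nf p f κ ^ 2
def Kf {ι : Type*} [Fintype ι] (p f : ι → ℝ) (κ : ℝ) : ℝ :=
  ∑ j, p j * Real.log (1 - κ * f j) + Real.log (Mf p f κ)
def uf {ι : Type*} [Fintype ι] (p f : ι → ℝ) (κ : ℝ) : ℝ := Nf p f κ / Mf p f κ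

structure Ctx {m : ℕ} (p f : Fin (m + 1) → ℝ) (b : ℝ) : Prop where
  hp : ∀ j, 0 < p j
  hs : ∑ j, p j = 1
  hb : 0 < b
  hf : ∀ j, f j ∈ Set.Icc (0 : ℝ) b
  hf0 : f 0 = 0
  hfm : f (Fin.last m) = b

namespace Ctx
variable {m : ℕ} {p f : Fin (m + 1) → ℝ} {b : ℝ}

lemma den_pos (C : Ctx p f b) {κ : ℝ} (hκ : κ < 1 / b) (j : Fin (m + 1)) : 0 < 1 - κ * f j := by
  have hb := C.hb
  have h1 : κ * b < 1 := by rwa [lt_div_iff₀ hb] at hκ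
  obtain ⟨h2, h3⟩ := C.hf j
  rcases le_total κ 0 with h | h <;> nlinarith

lemma z_nonneg (C : Ctx p f b) {κ : ℝ} (hκ : κ < 1 / b) (j : Fin (m + 1)) : 0 ≤ zf f κ j :=
  div_nonneg (C.hf j).1 (C.den_pos hκ j).le

lemma z_zero (C : Ctx p f b) {κ : ℝ} : zf f κ 0 = 0 := by simp [zf, C.hf0]

lemma z_le (C : Ctx p f b) {κ : ℝ} (hκ : κ < 1 / b) (j : Fin (m + 1)) :
    zf f κ j ≤ zf f κ (Fin.last m) := by
  unfold zf
  rw [div_le_div_iff₀ (C.den_pos hκ j) (C.den_pos hκ _), C.hfm]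
  nlinarith [(C.hf j).2]

lemma z_last_pos (C : Ctx p f b) {κ : ℝ} (hκ : κ < 1 / b) : 0 < zf f κ (Fin.last m) :=
  div_pos (by rw [C.hfm]; exact C.hb) (C.den_pos hκ _)

lemma one_add_z (C : Ctx p f b) {κ : ℝ} (hκ : κ < 1 / b) (j : Fin (m + 1)) :
    1 + κ * zf f κ j = 1 / (1 - κ * f j) := by
  have := (C.den_pos hκ j).ne'
  unfold zf; field_simp; ring

lemma N_pos (C : Ctx p f b) {κ : ℝ} (hκ : κ < 1 / b) : 0 < Nf p f κ := by
  unfold Nf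
  exact Finset.sum_pos' (fun j _ => mul_nonneg (C.hp j).le (C.z_nonneg hκ j))
    ⟨Fin.last m, Finset.mem_univ _, mul_pos (C.hp _) (C.z_last_pos hκ)⟩

lemma M_eq (C : Ctx p f b) {κ : ℝ} (hκ : κ < 1 / b) : Mf p f κ = ∑ j, p j / (1 - κ * f j) := by
  have : ∀ j, p j / (1 - κ * f j) = p j + κ * (p j * zf f κ j) := fun j => by
    rw [div_eq_mul_one_div, ← C.one_add_z hκ]; ring
  simp_rw [this, Finset.sum_add_distrib, C.hs, ← Finset.mul_sum]
  rfl

lemma M_pos (C : Ctx p f b) {κ : ℝ} (hκ : κ < 1 / b) : 0 < Mf p f κ := by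
  rw [C.M_eq hκ]
  exact Finset.sum_pos (fun j _ => div_pos (C.hp j) (C.den_pos hκ j)) Finset.univ_nonempty

lemma p0_le_M (C : Ctx p f b) {κ : ℝ} (hκ : κ < 1 / b) : p 0 ≤ Mf p f κ := by
  rw [C.M_eq hκ]
  have := Finset.single_le_sum (f := fun j => p j / (1 - κ * f j)) (fun j _ => (div_pos (C.hp j) (C.den_pos hκ j)).le) (Finset.mem_univ 0)
  simpa [C.hf0] using this

lemma V_eq (C : Ctx p f b) (κ : ℝ) : Vf p f κ = ∑ j, p j * (zf f κ j - Nf p f κ) ^ 2 := by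
  have : ∀ j, p j * (zf f κ j - Nf p f κ) ^ 2 = p j * zf f κ j ^ 2 - 2 * Nf p f κ * (p j * zf f κ j)
      + p j * Nf p f κ ^ 2 := fun j => by ring
  simp_rw [this, Finset.sum_add_distrib, Finset.sum_sub_distrib, ← Finset.mul_sum, ← Finset.sum_mul, C.hs]
  change _ = _ - 2 * Nf p f κ * Nf p f κ + _
  unfold Vf; ring

lemma V_ge (C : Ctx p f b) (κ : ℝ) (i : Fin (m + 1)) : p i * (zf f κ i - Nf p f κ) ^ 2 ≤ Vf p f κ := by
  rw [C.V_eq]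
  exact Finset.single_le_sum (f := fun j => p j * (zf f κ j - Nf p f κ) ^ 2)
    (fun j _ => mul_nonneg (C.hp j).le (sq_nonneg _)) (Finset.mem_univ i)

lemma V_pos (C : Ctx p f b) {κ : ℝ} (hκ : κ < 1 / b) : 0 < Vf p f κ := by
  refine lt_of_lt_of_le ?_ (C.V_ge κ 0)
  have := C.N_pos hκ
  rw [C.z_zero]
  exact mul_pos (C.hp 0) (by nlinarith)

lemma z_deriv (C : Ctx p f b) {κ : ℝ} (hκ : κ < 1 / b) (j : Fin (m + 1)) :
    HasDerivAt (fun κ => zf f κ j) (zf f κ j ^ 2) κ := by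
  unfold zf
  have h1 : HasDerivAt (fun κ : ℝ => 1 - κ * f j) (-f j) κ := by
    simpa using ((hasDerivAt_id' κ).mul_const (f j)).const_sub 1
  have h2 := (hasDerivAt_const κ (f j)).fun_div h1 (C.den_pos hκ j).ne'
  refine h2.congr_deriv ?_
  have := (C.den_pos hκ j).ne'
  field_simp
  ring

lemma N_deriv (C : Ctx p f b) {κ : ℝ} (hκ : κ < 1 / b) :
    HasDerivAt (Nf p f) (∑ j, p j * zf f κ j ^ 2) κ := by
  unfold Nf
  exact HasDerivAt.fun_sum fun j _ => (C.z_deriv hκ j).const_mul (p j)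

lemma M_deriv (C : Ctx p f b) {κ : ℝ} (hκ : κ < 1 / b) :
    HasDerivAt (Mf p f) (Nf p f κ + κ * ∑ j, p j * zf f κ j ^ 2) κ := by
  unfold Mf
  simpa using ((hasDerivAt_id' κ).fun_mul (C.N_deriv hκ)).const_add 1

lemma u_deriv (C : Ctx p f b) {κ : ℝ} (hκ : κ < 1 / b) :
    HasDerivAt (uf p f) (Vf p f κ / Mf p f κ ^ 2) κ := by
  unfold uf
  refine ((C.N_deriv hκ).fun_div (C.M_deriv hκ) (C.M_pos hκ).ne').congr_deriv ?_
  congr 1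
  unfold Vf Mf
  ring

lemma K_deriv (C : Ctx p f b) {κ : ℝ} (hκ : κ < 1 / b) :
    HasDerivAt (Kf p f) (κ * Vf p f κ / Mf p f κ) κ := by
  unfold Kf
  have h1 : ∀ j ∈ (Finset.univ : Finset (Fin (m + 1))), HasDerivAt (fun κ : ℝ => p j * Real.log (1 - κ * f j)) (-(p j * zf f κ j)) κ := by
    intro j _
    have h1 : HasDerivAt (fun κ : ℝ => 1 - κ * f j) (-f j) κ := by
      simpa using ((hasDerivAt_id' κ).mul_const (f j)).const_sub 1
    refine ((h1.log (C.den_pos hκ j).ne').const_mul (p j)).congr_deriv ?_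
    unfold zf; ring
  have h2 := (HasDerivAt.fun_sum h1).fun_add ((C.M_deriv hκ).log (C.M_pos hκ).ne')
  refine h2.congr_deriv ?_
  have hM := (C.M_pos hκ).ne'
  rw [Finset.sum_neg_distrib]
  change - Nf p f κ + _ = _
  rw [eq_div_iff hM, add_mul, div_mul_cancel₀ _ hM]
  unfold Vf Mf; ring

lemma V_deriv (C : Ctx p f b) {κ : ℝ} (hκ : κ < 1 / b) :
    ∃ v, 0 ≤ v ∧ HasDerivAt (Vf p f) v κ := by
  refine ⟨2 * ∑ j, p j * ((zf f κ j - Nf p f κ) ^ 2 * (zf f κ j + Nf p f κ)), ?_, ?_⟩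
  · have := C.N_pos hκ
    refine mul_nonneg (by norm_num) (Finset.sum_nonneg fun j _ => mul_nonneg (C.hp j).le
      (mul_nonneg (sq_nonneg _) (by linarith [C.z_nonneg hκ j])))
  · unfold Vf
    have h1 := HasDerivAt.fun_sum (u := Finset.univ) fun j _ => ((C.z_deriv hκ j).fun_pow 2).const_mul (p j)
    refine (h1.fun_sub ((C.N_deriv hκ).fun_pow 2)).congr_deriv ?_
    set n := Nf p f κ with hn
    have hN : ∑ j, p j * zf f κ j = n := rfl
    have e : ∀ j, p j * ((zf f κ j - n) ^ 2 * (zf f κ j + n)) =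
      p j * zf f κ j ^ 3 - n * (p j * zf f κ j ^ 2) - n ^ 2 * (p j * zf f κ j) + p j * n ^ 3 := fun j => by ring
    simp_rw [e, Finset.sum_add_distrib, Finset.sum_sub_distrib, ← Finset.mul_sum, ← Finset.sum_mul, C.hs, hN]
    have e2 : ∑ j, p j * (((2 : ℕ) : ℝ) * zf f κ j ^ (2 - 1) * zf f κ j ^ 2) = 2 * ∑ j, p j * zf f κ j ^ 3 := by
      rw [Finset.mul_sum]; exact Finset.sum_congr rfl fun j _ => by push_cast; ring
    rw [e2]; push_cast; ring

lemma N_zero (p f : Fin (m + 1) → ℝ) : Nf p f 0 = ∑ j, p j * f j := by simp [Nf, zf]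
lemma M_zero (p f : Fin (m + 1) → ℝ) : Mf p f 0 = 1 := by simp [Mf]
lemma K_zero (p f : Fin (m + 1) → ℝ) : Kf p f 0 = 0 := by simp [Kf, M_zero]

lemma D_anti (C : Ctx p f b) : AntitoneOn (fun κ => Kf p f κ - κ ^ 2 * Vf p f κ / 2) (Iio (1 / b)) := by
  have hd : ∀ κ ∈ Iio (1 / b), ∃ d, d ≤ 0 ∧ HasDerivAt (fun κ => Kf p f κ - κ ^ 2 * Vf p f κ / 2) d κ := by
    intro κ hκ
    obtain ⟨v, hv, hV⟩ := C.V_deriv hκ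
    refine ⟨_, ?_, (C.K_deriv hκ).fun_sub (((hasDerivAt_pow 2 κ).fun_mul hV).div_const 2)⟩
    have hM := C.M_pos hκ
    have hN := C.N_pos hκ
    have hVp := C.V_pos hκ
    have : κ * Vf p f κ / Mf p f κ ≤ κ * Vf p f κ := by
      rw [div_le_iff₀ hM]
      have : κ * Vf p f κ * Mf p f κ = κ * Vf p f κ + κ ^ 2 * (Vf p f κ * Nf p f κ) := by unfold Mf; ring
      rw [this]
      have : 0 ≤ κ ^ 2 * (Vf p f κ * Nf p f κ) := by positivity
      linarith
    have h2 : 0 ≤ κ ^ 2 * v := by positivity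
    push_cast
    simp only [pow_one]
    linarith
  apply antitoneOn_of_deriv_nonpos (convex_Iio _)
  · intro κ hκ
    obtain ⟨d, _, h⟩ := hd κ hκ
    exact h.continuousAt.continuousWithinAt
  · rw [interior_Iio]
    intro κ hκ
    obtain ⟨d, _, h⟩ := hd κ hκ
    exact h.differentiableAt.differentiableWithinAt
  · rw [interior_Iio]
    intro κ hκ
    obtain ⟨d, hd, h⟩ := hd κ hκ
    rw [h.deriv]; exact hd

lemma zero_mem (C : Ctx p f b) : (0 : ℝ) < 1 / b := by have := C.hb; positivity

lemma K_le (C : Ctx p f b) {κ : ℝ} (hκ : κ < 1 / b) (h0 : 0 ≤ κ) : 2 * Kf p f κ ≤ κ ^ 2 * Vf p f κ := by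
  have := C.D_anti C.zero_mem hκ h0
  simp [K_zero] at this
  linarith

lemma K_ge (C : Ctx p f b) {κ : ℝ} (hκ : κ < 1 / b) (h0 : κ ≤ 0) : κ ^ 2 * Vf p f κ ≤ 2 * Kf p f κ := by
  have := C.D_anti hκ C.zero_mem h0
  simp [K_zero] at this
  linarith

lemma K_mono (C : Ctx p f b) : StrictMonoOn (Kf p f) (Ico 0 (1 / b)) := by
  apply strictMonoOn_of_deriv_pos (convex_Ico _ _)
  · exact fun κ hκ => (C.K_deriv hκ.2).continuousAt.continuousWithinAt
  · rw [interior_Ico]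
    intro κ hκ
    rw [(C.K_deriv hκ.2).deriv]
    exact div_pos (mul_pos hκ.1 (C.V_pos hκ.2)) (C.M_pos hκ.2)

lemma K_anti (C : Ctx p f b) : StrictAntiOn (Kf p f) (Iic 0) := by
  apply strictAntiOn_of_deriv_neg (convex_Iic _)
  · exact fun κ hκ => (C.K_deriv (lt_of_le_of_lt hκ C.zero_mem)).continuousAt.continuousWithinAt
  · rw [interior_Iic]
    intro κ hκ
    have h := (lt_trans hκ C.zero_mem)
    rw [(C.K_deriv h).deriv]
    exact div_neg_of_neg_of_pos (mul_neg_of_neg_of_pos hκ (C.V_pos h)) (C.M_pos h)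

lemma K_pos (C : Ctx p f b) {κ : ℝ} (hκ : κ < 1 / b) (h0 : κ ≠ 0) : 0 < Kf p f κ := by
  rw [← K_zero p f]
  rcases lt_or_gt_of_ne h0 with h | h
  · exact C.K_anti h.le (le_refl (0:ℝ)) h
  · exact C.K_mono ⟨le_refl _, C.zero_mem⟩ ⟨h.le, hκ⟩ h

lemma u_mono (C : Ctx p f b) : StrictMonoOn (uf p f) (Iio (1 / b)) := by
  apply strictMonoOn_of_deriv_pos (convex_Iio _)
  · exact fun κ hκ => (C.u_deriv hκ).continuousAt.continuousWithinAt
  · rw [interior_Iio]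
    intro κ hκ
    rw [(C.u_deriv hκ).deriv]
    exact div_pos (C.V_pos hκ) (pow_pos (C.M_pos hκ) 2)

lemma u_zero (p f : Fin (m + 1) → ℝ) : uf p f 0 = ∑ j, f j * p j := by
  simp [uf, N_zero, M_zero, mul_comm]

lemma u_pos (C : Ctx p f b) {κ : ℝ} (hκ : κ < 1 / b) : 0 < uf p f κ :=
  div_pos (C.N_pos hκ) (C.M_pos hκ)

lemma u_sub (C : Ctx p f b) {κ : ℝ} (hκ : κ < 1 / b) (x : ℝ) :
    (uf p f κ - x) * Mf p f κ = ∑ j, p j * ((f j - x) / (1 - κ * f j)) := by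
  have hM := C.M_pos hκ
  unfold uf
  rw [sub_mul, div_mul_cancel₀ _ hM.ne', C.M_eq hκ]
  unfold Nf zf
  rw [Finset.mul_sum, ← Finset.sum_sub_distrib]
  exact Finset.sum_congr rfl fun j _ => by ring

lemma u_lt (C : Ctx p f b) {κ : ℝ} (hκ : κ < 1 / b) : uf p f κ < b := by
  have hM := C.M_pos hκ
  have h := C.u_sub hκ b
  have : ∑ j, p j * ((f j - b) / (1 - κ * f j)) < 0 := by
    apply Finset.sum_neg'
    · intro j _
      exact mul_nonpos_of_nonneg_of_nonpos (C.hp j).le (div_nonpos_of_nonpos_of_nonneg (by linarith [(C.hf j).2]) (C.den_pos hκ j).le)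
    · exact ⟨0, Finset.mem_univ _, mul_neg_of_pos_of_neg (C.hp 0) (by rw [C.hf0]; simpa using C.hb)⟩
  rw [← h] at this
  nlinarith

lemma u_surj (C : Ctx p f b) {x : ℝ} (hx0 : 0 < x) (hxb : x < b) : ∃ κ < 1 / b, uf p f κ = x := by
  have hb := C.hb
  -- low point
  obtain ⟨κ1, hk1, hu1⟩ : ∃ κ < 1 / b, uf p f κ ≤ x := by
    have hc : 0 < p 0 * x := mul_pos (C.hp 0) hx0
    set d := b / (p 0 * x) with hd
    have hd0 : 0 < d := by positivity
    have hk : -(d / x) < 1 / b := lt_trans (by rw [neg_lt_zero]; positivity) C.zero_mem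
    refine ⟨-(d / x), hk, ?_⟩
    have hM := C.M_pos hk
    have h := C.u_sub hk x
    have : ∑ j, p j * ((f j - x) / (1 - -(d / x) * f j)) ≤ 0 := by
      rw [Fin.sum_univ_succ]
      have h1 : ∀ j : Fin m, p j.succ * ((f j.succ - x) / (1 - -(d / x) * f j.succ)) ≤ p j.succ * (p 0 * x) := by
        intro j
        refine mul_le_mul_of_nonneg_left ?_ (C.hp _).le
        have hden := C.den_pos hk j.succ
        rw [div_le_iff₀ hden]
        rcases le_total (f j.succ) x with hle | hle
        · have : 0 ≤ (p 0 * x) * (1 - -(d / x) * f j.succ) := by positivity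
          linarith
        · have h3 : d ≤ 1 - -(d / x) * f j.succ := by
            have : d ≤ d / x * f j.succ := by
              rw [div_mul_eq_mul_div, le_div_iff₀ hx0]
              exact mul_le_mul_of_nonneg_left hle hd0.le
            linarith
          have h4 : b = p 0 * x * d := by rw [hd, mul_comm, div_mul_cancel₀ _ hc.ne']
          have h5 := mul_le_mul_of_nonneg_left h3 hc.le
          linarith [(C.hf j.succ).2]
      have h2 := Finset.sum_le_sum fun j (_ : j ∈ (Finset.univ : Finset (Fin m))) => h1 j
      rw [← Finset.sum_mul] at h2
      have h3 := C.hs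
      rw [Fin.sum_univ_succ] at h3
      have h4 : ∑ j : Fin m, p j.succ ≤ 1 := by linarith [C.hp 0]
      have h5 := mul_le_mul_of_nonneg_right h4 hc.le
      rw [C.hf0]
      simp only [mul_zero, sub_zero, div_one, zero_sub]
      linarith
    rw [← h] at this
    nlinarith
  obtain ⟨κ2, hk2, hu2⟩ : ∃ κ < 1 / b, x ≤ uf p f κ := by
    have hpm := C.hp (Fin.last m)
    -- choose 1 - κ b = δ
    set B := x / (1 - x / b) with hB
    have hxb' : 0 < 1 - x / b := by rw [sub_pos, div_lt_one hb]; exact hxb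
    have hB0 : 0 < B := by positivity
    set δ := p (Fin.last m) * (b - x) / (B + p (Fin.last m) * (b - x)) with hδ
    have hc : 0 < p (Fin.last m) * (b - x) := mul_pos hpm (by linarith)
    have hδ0 : 0 < δ := by positivity
    have hδ1 : δ < 1 := by rw [hδ, div_lt_one (by positivity)]; linarith
    have hk : (1 - δ) / b < 1 / b := by
      rw [div_lt_div_iff_of_pos_right hb]; linarith
    refine ⟨(1 - δ) / b, hk, ?_⟩
    have hM := C.M_pos hk
    have h := C.u_sub hk x
    have : 0 ≤ ∑ j, p j * ((f j - x) / (1 - (1 - δ) / b * f j)) := by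
      rw [Fin.sum_univ_castSucc]
      have h1 : ∀ j : Fin m, p j.castSucc * (-B) ≤ p j.castSucc * ((f j.castSucc - x) / (1 - (1 - δ) / b * f j.castSucc)) := by
        intro j
        refine mul_le_mul_of_nonneg_left ?_ (C.hp _).le
        have hden := C.den_pos hk j.castSucc
        rw [le_div_iff₀ hden]
        have hfj := (C.hf j.castSucc).1
        rcases le_total x (f j.castSucc) with hle | hle
        · have : 0 ≤ B * (1 - (1 - δ) / b * f j.castSucc) := by positivity
          linarith
        · have h3 : 1 - x / b ≤ 1 - (1 - δ) / b * f j.castSucc := by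
            have : (1 - δ) / b * f j.castSucc ≤ x / b := by
              rw [div_mul_eq_mul_div, div_le_div_iff_of_pos_right hb]
              nlinarith
            linarith
          have h4 : B * (1 - x / b) = x := by rw [hB, div_mul_cancel₀ _ hxb'.ne']
          have h5 := mul_le_mul_of_nonneg_left h3 hB0.le
          linarith
      have h2 := Finset.sum_le_sum fun j (_ : j ∈ (Finset.univ : Finset (Fin m))) => h1 j
      rw [← Finset.sum_mul] at h2
      have h3 := C.hs
      rw [Fin.sum_univ_castSucc] at h3
      have h4 : ∑ j : Fin m, p j.castSucc ≤ 1 := by linarith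
      have h5 := mul_le_mul_of_nonneg_right h4 hB0.le
      have h6 : p (Fin.last m) * ((f (Fin.last m) - x) / (1 - (1 - δ) / b * f (Fin.last m))) = B + p (Fin.last m) * (b - x) := by
        rw [C.hfm, div_mul_cancel₀ _ hb.ne', sub_sub_cancel, ← mul_div_assoc, hδ, div_div_cancel₀ hc.ne']
      rw [h6]
      linarith
    rw [← h] at this
    nlinarith
  have hcont : ContinuousOn (uf p f) (Iio (1 / b)) := fun κ hκ => (C.u_deriv hκ).continuousAt.continuousWithinAt
  have := (isPreconnected_Iio (a := 1 / b)).intermediate_value hk1 hk2 hcont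
  obtain ⟨κ, hκ, h⟩ := this ⟨hu1, hu2⟩
  exact ⟨κ, hκ, h⟩

lemma K_ge_log (C : Ctx p f b) {κ : ℝ} (hκ : κ ≤ 0) :
    Real.log (p 0) + p (Fin.last m) * Real.log (1 - κ * b) ≤ Kf p f κ := by
  have hk : κ < 1 / b := lt_of_le_of_lt hκ C.zero_mem
  have h1 : Real.log (p 0) ≤ Real.log (Mf p f κ) := Real.log_le_log (C.hp 0) (C.p0_le_M hk)
  have h2 := Finset.single_le_sum (f := fun j => p j * Real.log (1 - κ * f j))
    (fun j _ => mul_nonneg (C.hp j).le (Real.log_nonneg (by nlinarith [(C.hf j).1]))) (Finset.mem_univ (Fin.last m))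
  simp only [C.hfm] at h2
  unfold Kf
  linarith

lemma one_sub_ku (C : Ctx p f b) {κ : ℝ} (hκ : κ < 1 / b) : (1 - κ * uf p f κ) * Mf p f κ = 1 := by
  have := (C.M_pos hκ).ne'
  unfold uf
  field_simp
  unfold Mf; ring

lemma Kinf_eq (C : Ctx p f b) {κ : ℝ} (hκ : κ < 1 / b) : Kinfstar p (uf p f κ) f = Kf p f κ := by
  have hM := C.M_pos hκ
  set q : Fin (m + 1) → ℝ := fun j => p j / ((1 - κ * f j) * Mf p f κ) with hq
  have hqpos : ∀ j, 0 < q j := fun j => div_pos (C.hp j) (mul_pos (C.den_pos hκ j) hM)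
  have hleast : IsLeast {x | ∃ q ∈ stdSimplex ℝ (Fin (m + 1)),
    (∀ i, q i = 0 → p i = 0) ∧ (∑ i, f i * q i) = uf p f κ ∧ x = klReal p q} (Kf p f κ) := by
    constructor
    · refine ⟨q, ⟨fun j => (hqpos j).le, ?_⟩, fun i hi => absurd hi (hqpos i).ne', ?_, ?_⟩
      · simp_rw [hq, ← div_div, ← Finset.sum_div]
        rw [← C.M_eq hκ, div_self hM.ne']
      · unfold uf Nf
        rw [Finset.sum_div]
        refine Finset.sum_congr rfl fun j _ => ?_
        have := (C.den_pos hκ j).ne'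
        rw [hq]; unfold zf; field_simp
      · unfold klReal Kf
        have : ∀ i, (if p i = 0 then 0 else p i * Real.log (p i / q i)) = p i * Real.log (1 - κ * f i) + p i * Real.log (Mf p f κ) := by
          intro i
          rw [if_neg (C.hp i).ne', hq]
          simp only
          rw [div_div_cancel₀ (C.hp i).ne', Real.log_mul (C.den_pos hκ i).ne' hM.ne']
          ring
        simp_rw [this, Finset.sum_add_distrib, ← Finset.sum_mul, C.hs, one_mul]
    · rintro x ⟨r, hr, hr0, hru, rfl⟩
      have hrpos : ∀ i, 0 < r i := fun i => lt_of_le_of_ne (hr.1 i) fun h => (C.hp i).ne' (hr0 i h.symm)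
      have hterm : ∀ i, p i * Real.log (1 - κ * f i) + p i * Real.log (Mf p f κ) - (r i * (1 - κ * f i) * Mf p f κ - p i)
          ≤ (if p i = 0 then 0 else p i * Real.log (p i / r i)) := by
        intro i
        have hpi := C.hp i
        have hd := C.den_pos hκ i
        have hri := hrpos i
        rw [if_neg hpi.ne']
        have h1 := Real.log_le_sub_one_of_pos (x := r i * (1 - κ * f i) * Mf p f κ / p i) (by positivity)
        rw [Real.log_div (by positivity) hpi.ne', Real.log_mul (by positivity) hM.ne', Real.log_mul hri.ne' hd.ne'] at h1
        rw [Real.log_div hpi.ne' hri.ne']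
        have h2 := mul_le_mul_of_nonneg_left h1 hpi.le
        have h3 : p i * (r i * (1 - κ * f i) * Mf p f κ / p i - 1) = r i * (1 - κ * f i) * Mf p f κ - p i := by
          field_simp
        rw [h3] at h2
        nlinarith
      have := Finset.sum_le_sum fun i (_ : i ∈ (Finset.univ : Finset (Fin (m + 1)))) => hterm i
      rw [Finset.sum_sub_distrib, Finset.sum_add_distrib, Finset.sum_sub_distrib, ← Finset.sum_mul, ← Finset.sum_mul, C.hs, one_mul] at this
      have h4 : ∑ i, r i * (1 - κ * f i) = 1 - κ * uf p f κ := by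
        rw [← hru, Finset.mul_sum]
        have : (1 : ℝ) = ∑ i, r i := hr.2.symm
        rw [this, ← Finset.sum_sub_distrib]
        exact Finset.sum_congr rfl fun i _ => by rw [← this]; ring
      rw [h4, C.one_sub_ku hκ, sub_self, sub_zero] at this
      exact this
  exact hleast.csInf_eq

lemma Afun_eq (C : Ctx p f b) {κ : ℝ} (hκ : κ < 1 / b) :
    Afun p (uf p f κ) f = Real.sign κ * Real.sqrt (2 * Kf p f κ) := by
  unfold Afun
  rw [C.Kinf_eq hκ, ← u_zero]
  congr 1
  rcases lt_trichotomy κ 0 with h | h | h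
  · have := C.u_mono hκ C.zero_mem h
    rw [Real.sign_of_neg h, Real.sign_of_neg (by linarith)]
  · subst h; simp
  · have := C.u_mono C.zero_mem hκ h
    rw [Real.sign_of_pos h, Real.sign_of_pos (by linarith)]

end Ctx


/-- Unnormalised gamma density. -/
def gd (a x : ℝ) : ℝ := if 0 ≤ x then x ^ (a - 1) * Real.exp (-x) else 0

lemma gd_nonneg (a x : ℝ) : 0 ≤ gd a x := by
  unfold gd; split_ifs with h
  · positivity
  · exact le_rfl

lemma gd_neg (a : ℝ) {x : ℝ} (hx : x < 0) : gd a x = 0 := by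
  simp [gd, hx]

lemma gd_measurable (a : ℝ) : Measurable (gd a) := by
  unfold gd
  exact Measurable.ite measurableSet_Ici (by fun_prop) measurable_const

lemma gd_mul_exp_ae (a t : ℝ) : (fun x => gd a x * Real.exp (t * x)) =ᵐ[volume]
    (Ioi 0).indicator (fun x => x ^ (a - 1) * Real.exp (-((1 - t) * x))) := by
  have : ∀ᵐ x : ℝ, x ≠ 0 := by simp [ae_iff]
  filter_upwards [this] with x hx
  rcases lt_or_gt_of_ne hx with h | h
  · simp [gd_neg a h, h.le]
  · rw [indicator_of_mem (show x ∈ Ioi 0 from h)]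
    simp only [gd, h.le, if_true]
    rw [mul_assoc, ← Real.exp_add]; congr 2; ring

lemma gd_mul_exp_integrable {a t : ℝ} (ha : 0 < a) (ht : t < 1) :
    Integrable (fun x => gd a x * Real.exp (t * x)) := by
  rw [integrable_congr (gd_mul_exp_ae a t), integrable_indicator_iff measurableSet_Ioi]
  have := integrableOn_rpow_mul_exp_neg_mul_rpow (p := 1) (s := a - 1) (b := 1 - t) (by linarith) one_pos (by linarith)
  refine this.congr_fun (fun x _ => ?_) measurableSet_Ioi
  simp only [rpow_one, neg_mul]

lemma gd_mul_exp_integral {a t : ℝ} (ha : 0 < a) (ht : t < 1) :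
    ∫ x, gd a x * Real.exp (t * x) = (1 / (1 - t)) ^ a * Real.Gamma a := by
  rw [integral_congr_ae (gd_mul_exp_ae a t), integral_indicator measurableSet_Ioi]
  exact Real.integral_rpow_mul_exp_neg_mul_Ioi ha (by linarith)

lemma gd_cexp_integrable {a : ℝ} (ha : 0 < a) {z : ℂ} (hz : z.re < 1) :
    Integrable (fun x : ℝ => (gd a x : ℂ) * Complex.exp (z * x)) := by
  refine (gd_mul_exp_integrable ha hz).mono' ?_ ?_
  · have := gd_measurable a
    exact (by fun_prop : Measurable _).aestronglyMeasurable
  · filter_upwards with x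
    rw [norm_mul, Complex.norm_exp, Complex.norm_real, Real.norm_of_nonneg (gd_nonneg a x)]
    simp

def gm (a : ℝ) : Measure ℝ := volume.withDensity fun x => ENNReal.ofReal (gd a x)

lemma gd_cexp_integral {a : ℝ} (ha : 0 < a) {z : ℂ} (hz : z.re < 1) :
    ∫ x : ℝ, (gd a x : ℂ) * Complex.exp (z * x) = Real.Gamma a * Complex.exp (-(a * Complex.log (1 - z))) := by
  have hm : Measurable fun x => ENNReal.ofReal (gd a x) := (gd_measurable a).ennreal_ofReal
  have hM : ∀ z, complexMGF id (gm a) z = ∫ x : ℝ, (gd a x : ℂ) * Complex.exp (z * x) := by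
    intro z
    unfold complexMGF gm
    rw [integral_withDensity_eq_integral_toReal_smul hm (by simp)]
    congr 1; ext x
    rw [ENNReal.toReal_ofReal (gd_nonneg a x)]
    simp
  have hset : Iio 1 ⊆ integrableExpSet id (gm a) := by
    intro t ht
    unfold integrableExpSet gm
    simp only [mem_ofPred_eq]
    rw [integrable_withDensity_iff_integrable_smul' hm (by simp)]
    refine (gd_mul_exp_integrable ha ht).congr ?_
    filter_upwards with x
    rw [ENNReal.toReal_ofReal (gd_nonneg a x)]
    simp
  have hsub_int : Iio 1 ⊆ interior (integrableExpSet id (gm a)) := isOpen_Iio.subset_interior_iff.mpr hset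
  set U : Set ℂ := {z | z.re < 1} with hU
  have hUo : IsOpen U := isOpen_lt Complex.continuous_re continuous_const
  have h1 : AnalyticOnNhd ℂ (complexMGF id (gm a)) U :=
    analyticOnNhd_complexMGF.mono fun z hz => hsub_int hz
  have hsl : ∀ z ∈ U, 1 - z ∈ Complex.slitPlane := fun z hz => by
    left; simp only [Complex.sub_re, Complex.one_re]; have : z.re < 1 := hz
    linarith
  have h2 : AnalyticOnNhd ℂ (fun z => (Real.Gamma a : ℂ) * Complex.exp (-(a * Complex.log (1 - z)))) U := by
    apply DifferentiableOn.analyticOnNhd _ hUo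
    intro z hz
    have := hsl z hz
    apply DifferentiableAt.differentiableWithinAt
    have h : DifferentiableAt ℂ (fun z : ℂ => Complex.log (1 - z)) z :=
      DifferentiableAt.clog (by fun_prop) this
    fun_prop
  have hpc : IsPreconnected U := by
    apply Convex.isPreconnected
    exact (convex_Iio (1 : ℝ)).linear_preimage Complex.reLm
  have hreal : ∀ t : ℝ, t < 1 → complexMGF id (gm a) t = (Real.Gamma a : ℂ) * Complex.exp (-(a * Complex.log (1 - (t : ℂ)))) := by
    intro t ht
    rw [hM]
    have : ∀ x : ℝ, (gd a x : ℂ) * Complex.exp (t * x) = ((gd a x * Real.exp (t * x) : ℝ) : ℂ) := by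
      intro x; push_cast; rfl
    simp_rw [this]
    rw [integral_complex_ofReal, gd_mul_exp_integral ha ht]
    have h1t : 0 < 1 - t := by linarith
    rw [one_div, Real.inv_rpow h1t.le, Real.rpow_def_of_pos h1t, ← Real.exp_neg]
    rw [← Complex.ofReal_one, ← Complex.ofReal_sub, ← Complex.ofReal_log h1t.le]
    push_cast
    rw [mul_comm]; congr 3; ring
  have hfr : ∃ᶠ z in nhdsWithin (0 : ℂ) {0}ᶜ, complexMGF id (gm a) z = (Real.Gamma a : ℂ) * Complex.exp (-(a * Complex.log (1 - z))) := by
    have ht : Filter.Tendsto (fun t : ℝ => (t : ℂ)) (nhdsWithin 0 {0}ᶜ) (nhdsWithin (0 : ℂ) {0}ᶜ) := by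
      apply tendsto_nhdsWithin_of_tendsto_nhds_of_eventually_within
      · exact (Complex.continuous_ofReal.tendsto' 0 0 (by simp)).mono_left nhdsWithin_le_nhds
      · filter_upwards [self_mem_nhdsWithin] with t ht
        simpa using ht
    apply ht.frequently
    apply Filter.Eventually.frequently
    have : ∀ᶠ t : ℝ in nhdsWithin 0 {0}ᶜ, t < 1 := nhdsWithin_le_nhds (Iio_mem_nhds (by norm_num))
    filter_upwards [this] with t ht using hreal t ht
  have := h1.eqOn_of_preconnected_of_frequently_eq h2 hpc (show (0:ℂ) ∈ U by simp [hU]) hfr hz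
  rw [← hM]
  exact this


def cg (a : ℝ) (r y : ℝ) : ℂ := Complex.exp (-(a * Complex.log ((r : ℂ) + (y : ℂ) * Complex.I)))

lemma cg_norm (a : ℝ) {r : ℝ} (hr : 0 < r) (y : ℝ) :
    ‖cg a r y‖ = Real.exp (-(a / 2 * Real.log (r ^ 2 + y ^ 2))) := by
  unfold cg
  rw [Complex.norm_exp]
  congr 1
  rw [Complex.neg_re, Complex.re_ofReal_mul, Complex.log_re, Complex.norm_add_mul_I, Real.log_sqrt (by positivity)]
  ring

lemma cg_continuous (a : ℝ) {r : ℝ} (hr : 0 < r) : Continuous (cg a r) := by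
  unfold cg
  refine Complex.continuous_exp.comp (Continuous.neg (continuous_const.mul ?_))
  exact Continuous.clog (by fun_prop) fun y => by left; simpa using hr

lemma cg_norm_le {a : ℝ} (ha : 0 ≤ a) {r : ℝ} (hr : 0 < r) (y : ℝ) :
    ‖cg a r y‖ ≤ Real.exp (-(a / 2 * Real.log (r ^ 2))) := by
  rw [cg_norm a hr]
  apply Real.exp_le_exp.mpr
  have : Real.log (r ^ 2) ≤ Real.log (r ^ 2 + y ^ 2) := Real.log_le_log (by positivity) (by nlinarith [sq_nonneg y])
  have := mul_le_mul_of_nonneg_left this (by positivity : 0 ≤ a / 2)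
  linarith

lemma cg_integrable {a : ℝ} (ha : 2 ≤ a) {r : ℝ} (hr : 0 < r) : Integrable (cg a r) := by
  have h1 : Integrable (fun y : ℝ => Real.exp (-(a / 2 * Real.log (r ^ 2))) * (1 + (y / r) ^ 2)⁻¹) :=
    (integrable_inv_one_add_sq.comp_div hr.ne').const_mul _
  refine h1.mono' (cg_continuous a hr).aestronglyMeasurable ?_
  filter_upwards with y
  rw [cg_norm a hr]
  have h2 : r ^ 2 + y ^ 2 = r ^ 2 * (1 + (y / r) ^ 2) := by field_simp
  have h3 : 0 < 1 + (y / r) ^ 2 := by positivity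
  rw [h2, Real.log_mul (by positivity) h3.ne']
  conv_rhs => rw [← Real.exp_log h3, ← Real.exp_neg, ← Real.exp_add]
  apply Real.exp_le_exp.mpr
  have : 0 ≤ Real.log (1 + (y / r) ^ 2) := Real.log_nonneg (by nlinarith [sq_nonneg (y / r)])
  nlinarith

lemma gd_continuous {a : ℝ} (ha : 1 < a) : Continuous (gd a) := by
  have : gd a = fun x => (max x 0) ^ (a - 1) * Real.exp (-x) := by
    ext x; unfold gd; split_ifs with h
    · rw [max_eq_left h]
    · rw [max_eq_right (not_le.mp h).le, Real.zero_rpow (by linarith), zero_mul]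
  rw [this]
  exact ((continuous_id.max continuous_const).rpow_const fun x => Or.inr (by linarith)).mul (by fun_prop)

open FourierTransform in
lemma gd_inversion {a : ℝ} (ha : 2 ≤ a) {r : ℝ} (hr : 0 < r) (x : ℝ) :
    ((gd a x * Real.exp ((1 - r) * x) : ℝ) : ℂ) =
      Real.Gamma a / (2 * π) * ∫ τ : ℝ, Complex.exp (τ * x * Complex.I) * cg a r τ := by
  set h : ℝ → ℂ := fun x => (gd a x : ℂ) * Complex.exp (((1 - r : ℝ) : ℂ) * x) with hh
  have hi : Integrable h := gd_cexp_integrable (by linarith) (by simpa using hr)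
  have hF : 𝓕 h = fun w : ℝ => (Real.Gamma a : ℂ) * cg a r (2 * π * w) := by
    ext w
    rw [Real.fourier_real_eq_integral_exp_smul]
    have := gd_cexp_integral (a := a) (by linarith) (z := ((1 - r : ℝ) : ℂ) - ((2 * π * w : ℝ) : ℂ) * Complex.I)
      (by simpa using hr)
    unfold cg
    have e : (1 : ℂ) - (((1 - r : ℝ) : ℂ) - ((2 * π * w : ℝ) : ℂ) * Complex.I) = (r : ℂ) + ((2 * π * w : ℝ) : ℂ) * Complex.I := by
      push_cast; ring
    rw [e] at this
    rw [← this]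
    congr 1; ext v
    rw [hh, smul_eq_mul, mul_left_comm, ← Complex.exp_add]
    congr 2; push_cast; ring
  have hFi : Integrable (𝓕 h) := by
    rw [hF]
    exact ((cg_integrable ha hr).comp_mul_left' (by positivity)).const_mul _
  have hc : Continuous h := by
    have := gd_continuous (a := a) (by linarith)
    fun_prop
  have := hi.fourierInv_fourier_eq hFi (v := x) hc.continuousAt
  rw [Real.fourierInv_eq', hF] at this
  have e2 : h x = ((gd a x * Real.exp ((1 - r) * x) : ℝ) : ℂ) := by rw [hh]; push_cast; rfl
  rw [← e2, ← this]
  have e3 : ∀ w : ℝ, Complex.exp (((2 * π * inner ℝ w x : ℝ) : ℂ) * Complex.I) • ((Real.Gamma a : ℂ) * cg a r (2 * π * w))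
      = (fun τ : ℝ => (Real.Gamma a : ℂ) * (Complex.exp (τ * x * Complex.I) * cg a r τ)) (2 * π * w) := by
    intro w
    simp only [smul_eq_mul]
    rw [mul_left_comm]
    congr 3
    simp [inner]
    ring
  simp_rw [e3]
  rw [Measure.integral_comp_mul_left (fun τ : ℝ => (Real.Gamma a : ℂ) * (Complex.exp (τ * x * Complex.I) * cg a r τ)) (2 * π),
    integral_const_mul, abs_of_pos (by positivity)]
  rw [Complex.real_smul]
  generalize (∫ τ : ℝ, Complex.exp (τ * x * Complex.I) * cg a r τ) = J
  push_cast
  have : (π : ℂ) ≠ 0 := by exact_mod_cast Real.pi_ne_zero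
  field_simp


lemma gamma_slice {ι : Type*} [Fintype ι] (α c : ι → ℝ) (hα : ∀ j, 0 < α j) {a0 u lam : ℝ} (ha0 : 2 ≤ a0)
    (hu : 0 < u) (hr : ∀ j, 0 < 1 - lam * c j) (hr0 : 0 < 1 + lam * u) :
    Integrable (fun G : ι → ℝ => (∏ j, gd (α j) (G j)) * gd a0 ((∑ j, c j * G j) / u)) ∧
    ((∫ G : ι → ℝ, (∏ j, gd (α j) (G j)) * gd a0 ((∑ j, c j * G j) / u) : ℝ) : ℂ) =
      (Real.Gamma a0 * ∏ j, (Real.Gamma (α j) : ℂ)) / (2 * π) *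
        ∫ τ : ℝ, cg a0 (1 + lam * u) τ * ∏ j, cg (α j) (1 - lam * c j) (-(τ * (c j / u))) := by
  set z : ℝ → ι → ℂ := fun τ j => ((lam * c j : ℝ) : ℂ) + ((τ * (c j / u) : ℝ) : ℂ) * Complex.I with hz
  have hzre : ∀ τ j, (z τ j).re < 1 := fun τ j => by simp [hz]; linarith [hr j]
  set P : (ι → ℝ) → ℝ → ℂ := fun G τ =>
    (∏ j, ((gd (α j) (G j) : ℂ) * Complex.exp (z τ j * G j))) * cg a0 (1 + lam * u) τ with hP
  -- pointwise inversion
  have h1 : ∀ G : ι → ℝ, (((∏ j, gd (α j) (G j)) * gd a0 ((∑ j, c j * G j) / u) : ℝ) : ℂ)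
      = Real.Gamma a0 / (2 * π) * ∫ τ, P G τ := by
    intro G
    set x := (∑ j, c j * G j) / u with hx
    have h2 := gd_inversion ha0 hr0 x
    have h3 : gd a0 x = Real.exp (lam * u * x) * (gd a0 x * Real.exp ((1 - (1 + lam * u)) * x)) := by
      rw [mul_left_comm, ← Real.exp_add]; ring_nf; simp
    have hxs : u * x = ∑ j, c j * G j := by rw [hx]; field_simp
    have h4 : ∀ τ, P G τ = ((∏ j, gd (α j) (G j) : ℝ) : ℂ) * (Real.exp (lam * u * x) : ℝ) *
        (Complex.exp (τ * x * Complex.I) * cg a0 (1 + lam * u) τ) := by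
      intro τ
      simp only [hP]
      rw [Finset.prod_mul_distrib, ← Complex.exp_sum]
      have : ∑ j, z τ j * G j = ((lam * u * x : ℝ) : ℂ) + τ * x * Complex.I := by
        have e1 : lam * u * x = ∑ j, lam * c j * G j := by
          rw [mul_assoc, hxs, Finset.mul_sum]; simp only [mul_assoc]
        have e2 : (τ : ℂ) * x = ((∑ j, τ * (c j / u) * G j : ℝ) : ℂ) := by
          rw [← Complex.ofReal_mul]; congr 1
          rw [hx, Finset.sum_div, Finset.mul_sum]
          refine Finset.sum_congr rfl fun j _ => by ring
        rw [e1, e2]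
        push_cast
        rw [Finset.sum_mul, ← Finset.sum_add_distrib]
        refine Finset.sum_congr rfl fun j _ => by simp only [hz]; push_cast; ring
      rw [this, Complex.exp_add]
      push_cast; ring
    simp_rw [h4]
    rw [integral_const_mul, h3]
    rw [Complex.ofReal_mul, Complex.ofReal_mul, h2]
    ring
  have hPi : Integrable (Function.uncurry P) ((volume : Measure (ι → ℝ)).prod volume) := by
    have hb : Integrable (fun q : (ι → ℝ) × ℝ => (∏ j, (gd (α j) (q.1 j) * Real.exp (lam * c j * q.1 j))) * ‖cg a0 (1 + lam * u) q.2‖)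
        ((volume : Measure (ι → ℝ)).prod volume) := by
      refine Integrable.mul_prod (f := fun G : ι → ℝ => ∏ j, (gd (α j) (G j) * Real.exp (lam * c j * G j))) ?_ (cg_integrable ha0 hr0).norm
      exact Integrable.fintype_prod (f := fun j x => gd (α j) x * Real.exp (lam * c j * x)) fun j => gd_mul_exp_integrable (hα j) (by linarith [hr j])
    refine hb.mono' ?_ ?_
    · apply Measurable.aestronglyMeasurable
      have h5 := (cg_continuous a0 hr0).measurable
      have h6 : ∀ j, Measurable (gd (α j)) := fun j => gd_measurable _
      simp only [hP, hz, Function.uncurry_def]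
      refine Measurable.mul ?_ (h5.comp measurable_snd)
      refine Finset.measurable_prod _ fun j _ => ?_
      have := h6 j
      refine Measurable.mul (Complex.measurable_ofReal.comp (this.comp ((measurable_pi_apply j).comp measurable_fst))) ?_
      fun_prop
    · filter_upwards with q
      simp only [hP, Function.uncurry_def, norm_mul, norm_prod]
      gcongr with j
      · exact gd_nonneg _ _
      · rw [Complex.norm_real, Real.norm_of_nonneg (gd_nonneg _ _)]
      · rw [Complex.norm_exp]; simp [hz]
  constructor
  · have h7 := (hPi.integral_prod_left.const_mul (Real.Gamma a0 / (2 * π) : ℂ)).re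
    refine h7.congr ?_
    filter_upwards with G
    have := h1 G
    simp only [Function.uncurry_def]
    rw [← this]
    exact Complex.ofReal_re _
  · rw [← integral_complex_ofReal]
    simp_rw [h1]
    rw [integral_const_mul]
    rw [integral_integral_swap hPi]
    have h8 : ∀ τ : ℝ, ∫ G, P G τ = (∏ j, (Real.Gamma (α j) : ℂ)) * (cg a0 (1 + lam * u) τ * ∏ j, cg (α j) (1 - lam * c j) (-(τ * (c j / u)))) := by
      intro τ
      simp only [hP]
      rw [integral_mul_const, integral_fintype_prod_volume_eq_prod (fun j x => (gd (α j) x : ℂ) * Complex.exp (z τ j * x))]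
      have : ∀ j, ∫ x : ℝ, (gd (α j) x : ℂ) * Complex.exp (z τ j * x) = Real.Gamma (α j) * cg (α j) (1 - lam * c j) (-(τ * (c j / u))) := by
        intro j
        rw [gd_cexp_integral (hα j) (hzre τ j)]
        unfold cg
        congr 5
        simp only [hz]; push_cast; ring
      simp_rw [this, Finset.prod_mul_distrib]
      ring
    simp_rw [h8]
    rw [integral_const_mul]
    ring


lemma cg_scale (a : ℝ) {r : ℝ} (hr : 0 < r) (y : ℝ) :
    cg a r y = (Real.exp (-(a * Real.log r)) : ℝ) * Complex.exp (-(a * Complex.log (1 - ((-(y / r) : ℝ) : ℂ) * Complex.I))) := by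
  unfold cg
  have h0 : (r : ℂ) ≠ 0 := by exact_mod_cast hr.ne'
  have h1 : (r : ℂ) + (y : ℂ) * Complex.I = (r : ℝ) * (1 - ((-(y / r) : ℝ) : ℂ) * Complex.I) := by
    push_cast; field_simp; ring
  rw [h1, Complex.log_ofReal_mul hr (one_sub_ne _)]
  push_cast
  rw [← Complex.exp_add]
  congr 1; ring

lemma cg_succ (a : ℝ) {r : ℝ} (hr : 0 < r) (y : ℝ) :
    cg (a + 1) r y = ((r : ℂ) + (y : ℂ) * Complex.I)⁻¹ * cg a r y := by
  unfold cg
  have h0 : (r : ℂ) + (y : ℂ) * Complex.I ≠ 0 := by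
    intro h; have := congrArg Complex.re h; simp at this; exact hr.ne' this
  conv_rhs => rw [← Complex.exp_log h0, ← Complex.exp_neg, ← Complex.exp_add]
  rw [Complex.exp_log h0]
  congr 1; push_cast; ring

def Jf {m : ℕ} (α f : Fin (m + 1) → ℝ) (u : ℝ) : ℝ :=
  ∫ G : Fin m → ℝ, (∏ j, gd (α j.succ) (G j)) * gd (α 0 + 1) ((∑ j, (f j.succ - u) * G j) / u)

def af {m : ℕ} (p f : Fin (m + 1) → ℝ) (A κ : ℝ) (j : Fin (m + 1)) : ℝ :=
  (zf f κ j - Nf p f κ) / Real.sqrt (A * Vf p f κ)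

lemma Jf_eq {m : ℕ} {p f : Fin (m + 1) → ℝ} {b : ℝ} (C : Ctx p f b) {A : ℝ} (hA : 0 < A)
    (α : Fin (m + 1) → ℝ) (hα : ∀ j, α j = A * p j) (hα0 : 1 ≤ α 0) {κ : ℝ} (hκ : κ < 1 / b) :
    Integrable (fun G : Fin m → ℝ => (∏ j, gd (α j.succ) (G j)) * gd (α 0 + 1) ((∑ j, (f j.succ - uf p f κ) * G j) / uf p f κ)) ∧
    Jf α f (uf p f κ) = (Real.Gamma (α 0 + 1) * ∏ j : Fin m, Real.Gamma (α j.succ)) / (2 * π) *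
      (uf p f κ * Mf p f κ / Real.sqrt (A * Vf p f κ) * Real.exp (-(A * Kf p f κ)) * (Iint α (af p f A κ) (af p f A κ 0)).re) := by
  set u := uf p f κ with hu
  set M := Mf p f κ with hM
  set N := Nf p f κ with hN
  set V := Vf p f κ with hV
  set a := af p f A κ with ha
  have hup : 0 < u := C.u_pos hκ
  have hMp : 0 < M := C.M_pos hκ
  have hNp : 0 < N := C.N_pos hκ
  have hVp : 0 < V := C.V_pos hκ
  have huM : u * M = N := by rw [hu, uf, ← hN, ← hM]; field_simp
  have hMN : M = 1 + κ * N := rfl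
  set S := Real.sqrt (A * V) with hS
  have hSp : 0 < S := Real.sqrt_pos.mpr (by positivity)
  have hαp : ∀ j, 0 < α j := fun j => by rw [hα]; exact mul_pos hA (C.hp j)
  set r : Fin (m + 1) → ℝ := fun j => M * (1 - κ * f j) with hr
  have hrp : ∀ j, 0 < r j := fun j => mul_pos hMp (C.den_pos hκ j)
  have hre : ∀ j, 1 - κ * M * (f j - u) = r j := fun j => by
    simp only [hr]
    have : κ * M * (f j - u) = κ * M * f j - κ * (u * M) := by ring
    rw [this, huM, mul_sub, mul_one]; nth_rw 2 [hMN]; ring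
  have hr0 : 1 + κ * M * u = M := by
    have : κ * M * u = κ * (u * M) := by ring
    rw [this, huM]; exact hMN.symm
  obtain ⟨hI, hE⟩ := gamma_slice (fun j : Fin m => α j.succ) (fun j => f j.succ - u) (fun j => hαp _)
    (a0 := α 0 + 1) (u := u) (lam := κ * M) (by linarith) hup (fun j => by rw [hre]; exact hrp _) (by rw [hr0]; exact hMp)
  refine ⟨hI, ?_⟩
  simp only [hre, hr0] at hE
  have hr00 : r 0 = M := by simp [hr, C.hf0]
  -- rewrite integrand
  have h1 : ∀ τ : ℝ, cg (α 0 + 1) M τ * ∏ j : Fin m, cg (α j.succ) (r j.succ) (-(τ * ((f j.succ - u) / u)))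
      = ((M : ℂ) + (τ : ℂ) * Complex.I)⁻¹ * ∏ j, cg (α j) (r j) (-(τ * ((f j - u) / u))) := by
    intro τ
    rw [Fin.prod_univ_succ, cg_succ _ hMp, hr00, C.hf0]
    have : -(τ * ((0 - u) / u)) = τ := by field_simp; ring
    rw [this]; ring
  have h2 : ∏ j, Real.exp (-(α j * Real.log (r j))) = Real.exp (-(A * Kf p f κ)) := by
    rw [← Real.exp_sum]
    congr 1
    unfold Kf
    rw [Finset.sum_neg_distrib, mul_add, Finset.mul_sum]
    congr 1
    have : ∀ j, α j * Real.log (r j) = A * (p j * Real.log (1 - κ * f j)) + A * Real.log M * p j := by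
      intro j; simp only [hr]; rw [Real.log_mul hMp.ne' (C.den_pos hκ j).ne', hα]; ring
    simp_rw [this, Finset.sum_add_distrib, ← Finset.mul_sum, C.hs]; simp [hM]
  set d := u * M ^ 2 / S with hd
  have hdp : 0 < d := by positivity
  have haj : ∀ (s : ℝ) j, -(-(d * s * ((f j - u) / u)) / r j) = s * a j := by
    intro s j
    have hden := C.den_pos hκ j
    have hz : zf f κ j = f j / (1 - κ * f j) := rfl
    have e : M * (f j - u) = f j - N * (1 - κ * f j) := by rw [mul_sub, mul_comm M u, huM, hMN]; ring
    simp only [ha, af, hr, ← hN, ← hV, ← hS, hd, hz]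
    have e2 : f j / (1 - κ * f j) - N = M * (f j - u) / (1 - κ * f j) := by
      rw [e, sub_div, mul_div_assoc, div_self hden.ne', mul_one]
    rw [e2]
    field_simp
  have h3 : ∀ s : ℝ, ((M : ℂ) + ((d * s : ℝ) : ℂ) * Complex.I)⁻¹ * ∏ j, cg (α j) (r j) (-(d * s * ((f j - u) / u)))
      = ((M⁻¹ * Real.exp (-(A * Kf p f κ)) : ℝ) : ℂ) * ((1 - (s * a 0 : ℝ) * Complex.I)⁻¹ * psiF α a s) := by
    intro s
    have e1 : ∏ j, cg (α j) (r j) (-(d * s * ((f j - u) / u))) = (Real.exp (-(A * Kf p f κ)) : ℝ) * psiF α a s := by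
      rw [← h2]
      unfold psiF
      rw [← Finset.sum_neg_distrib, Complex.exp_sum, Complex.ofReal_prod, ← Finset.prod_mul_distrib]
      refine Finset.prod_congr rfl fun j _ => ?_
      rw [cg_scale _ (hrp j), haj]
    have e2 : (M : ℂ) + ((d * s : ℝ) : ℂ) * Complex.I = (M : ℂ) * (1 - (s * a 0 : ℝ) * Complex.I) := by
      rw [← haj s 0, hr00, C.hf0]
      have : (M : ℂ) ≠ 0 := by exact_mod_cast hMp.ne'
      have : (u : ℂ) ≠ 0 := by exact_mod_cast hup.ne'
      push_cast
      field_simp; ring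
    rw [e1, e2, mul_inv]
    push_cast; ring
  have h4 : (∫ τ : ℝ, cg (α 0 + 1) M τ * ∏ j : Fin m, cg (α j.succ) (r j.succ) (-(τ * ((f j.succ - u) / u))))
      = ((d * M⁻¹ * Real.exp (-(A * Kf p f κ)) : ℝ) : ℂ) * Iint α a (a 0) := by
    simp_rw [h1]
    have := Measure.integral_comp_mul_left (fun τ : ℝ => ((M : ℂ) + (τ : ℂ) * Complex.I)⁻¹ * ∏ j, cg (α j) (r j) (-(τ * ((f j - u) / u)))) d
    simp only [h3] at this
    rw [integral_const_mul, abs_of_pos (by positivity), Complex.real_smul] at this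
    change _ * Iint α a (a 0) = _ at this
    have hdc : (d : ℂ) ≠ 0 := by exact_mod_cast hdp.ne'
    rw [mul_assoc, Complex.ofReal_mul, mul_assoc, this, ← mul_assoc, ← Complex.ofReal_mul, mul_inv_cancel₀ hdp.ne']
    simp
  rw [h4] at hE
  have h5 := congrArg Complex.re hE
  rw [Complex.ofReal_re] at h5
  unfold Jf
  rw [h5]
  have e5 : ((Real.Gamma (α 0 + 1) : ℂ) * ∏ j : Fin m, (Real.Gamma (α j.succ) : ℂ)) / (2 * π) *
      (((d * M⁻¹ * Real.exp (-(A * Kf p f κ)) : ℝ) : ℂ) * Iint α a (a 0)) =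
      (((Real.Gamma (α 0 + 1) * ∏ j : Fin m, Real.Gamma (α j.succ)) / (2 * π) * (d * M⁻¹ * Real.exp (-(A * Kf p f κ))) : ℝ) : ℂ) * Iint α a (a 0) := by
    push_cast; ring
  rw [e5, Complex.re_ofReal_mul, hd]
  field_simp


lemma measurable_snoc (m : ℕ) : Measurable (fun q : (Fin m → ℝ) × ℝ => (Fin.snoc q.1 q.2 : Fin (m + 1) → ℝ)) := by
  rw [measurable_pi_iff]
  intro i
  refine Fin.lastCases ?_ (fun j => ?_) i
  · simpa using measurable_snd
  · simp only [Fin.snoc_castSucc]; fun_prop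

lemma measurable_cons' (m : ℕ) : Measurable (fun q : (Fin m → ℝ) × ℝ => (Fin.cons q.2 q.1 : Fin (m + 1) → ℝ)) := by
  rw [measurable_pi_iff]
  intro i
  refine Fin.cases ?_ (fun j => ?_) i
  · simpa using measurable_snd
  · simp only [Fin.cons_succ]; fun_prop

lemma lint_insertNth {m : ℕ} (i : Fin (m + 1)) {Φ : (Fin (m + 1) → ℝ) → ℝ≥0∞} (hΦ : Measurable Φ) :
    ∫⁻ G, Φ G = ∫⁻ y : Fin m → ℝ, ∫⁻ g : ℝ, Φ (i.insertNth g y) := by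
  have hp := volume_preserving_piFinSuccAbove (fun _ : Fin (m + 1) => ℝ) i
  rw [← hp.symm.lintegral_comp hΦ, Measure.volume_eq_prod, lintegral_prod_symm]
  · rfl
  · exact (hΦ.comp (MeasurableEquiv.measurable _)).aemeasurable

lemma lint_snoc {m : ℕ} {Φ : (Fin (m + 1) → ℝ) → ℝ≥0∞} (hΦ : Measurable Φ) :
    ∫⁻ G, Φ G = ∫⁻ y : Fin m → ℝ, ∫⁻ g : ℝ, Φ (Fin.snoc y g) := by
  rw [lint_insertNth (Fin.last m) hΦ]
  simp only [Fin.insertNth_last']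

lemma lint_cons {m : ℕ} {Φ : (Fin (m + 1) → ℝ) → ℝ≥0∞} (hΦ : Measurable Φ) :
    ∫⁻ G, Φ G = ∫⁻ y : Fin m → ℝ, ∫⁻ g : ℝ, Φ (Fin.cons g y) := by
  rw [lint_insertNth 0 hΦ]
  simp only [Fin.insertNth_zero']

lemma lint_smul {m : ℕ} {Φ : (Fin m → ℝ) → ℝ≥0∞} (hΦ : Measurable Φ) {r : ℝ} (hr : 0 < r) :
    ∫⁻ y, Φ y = ENNReal.ofReal (r ^ m) * ∫⁻ x, Φ (r • x) := by
  have h := Measure.map_addHaar_smul (volume : Measure (Fin m → ℝ)) hr.ne'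
  have h2 : ∫⁻ x, Φ (r • x) = ∫⁻ y, Φ y ∂(Measure.map (r • ·) (volume : Measure (Fin m → ℝ))) :=
    (lintegral_map hΦ (measurable_const_smul r)).symm
  rw [h2, h, lintegral_smul_measure, smul_eq_mul, ← mul_assoc, ← ENNReal.ofReal_mul (by positivity)]
  rw [abs_of_pos (by positivity)]
  simp only [Module.finrank_fintype_fun_eq_card, Fintype.card_fin]
  rw [mul_inv_cancel₀ (by positivity)]
  simp

/-- unnormalised Dirichlet density in homogeneous form. -/
lemma prod_gd_scale {m : ℕ} (β : Fin (m + 1) → ℝ) {r : ℝ} (hr : 0 < r) (x : Fin m → ℝ) :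
    ∏ j, gd (β j) (r * (Fin.snoc x (1 - ∑ i, x i) : Fin (m + 1) → ℝ) j) =
      r ^ (∑ j, β j - (m + 1)) * Real.exp (-r) * dirichletDensity m β x := by
  set w : Fin (m + 1) → ℝ := Fin.snoc x (1 - ∑ i, x i) with hw
  have hws : ∑ j, w j = 1 := by
    rw [Fin.sum_univ_castSucc]; simp [hw]
  unfold dirichletDensity
  by_cases h : x ∈ {x : Fin m → ℝ | (∀ i, 0 ≤ x i) ∧ ∑ i, x i ≤ 1}
  · rw [indicator_of_mem h]
    obtain ⟨h1, h2⟩ := h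
    have hw0 : ∀ j, 0 ≤ w j := by
      intro j
      refine Fin.lastCases ?_ (fun i => ?_) j
      · simp [hw]; exact h2
      · simp [hw, h1 i]
    have e1 : ∀ j, gd (β j) (r * w j) = r ^ (β j - 1) * Real.exp (-(r * w j)) * w j ^ (β j - 1) := by
      intro j
      unfold gd
      rw [if_pos (mul_nonneg hr.le (hw0 j)), Real.mul_rpow hr.le (hw0 j)]; ring
    simp_rw [e1, Finset.prod_mul_distrib]
    rw [← Real.rpow_sum_of_pos hr, ← Real.exp_sum, Finset.sum_neg_distrib, ← Finset.mul_sum, hws, Finset.sum_sub_distrib]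
    congr 1
    · simp
    · rw [Fin.prod_univ_castSucc]; simp [hw]
  · rw [indicator_of_notMem h, mul_zero]
    have : ∃ j, w j < 0 := by
      by_contra hc
      push Not at hc
      apply h
      refine ⟨fun i => ?_, ?_⟩
      · have := hc i.castSucc; simpa [hw] using this
      · have := hc (Fin.last m); simpa [hw] using this
    obtain ⟨j, hj⟩ := this
    exact Finset.prod_eq_zero (Finset.mem_univ j) (gd_neg _ (mul_neg_of_pos_of_neg hr hj))

lemma dirDens_nonneg {m : ℕ} (β : Fin (m + 1) → ℝ) (x : Fin m → ℝ) : 0 ≤ dirichletDensity m β x := by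
  unfold dirichletDensity
  refine indicator_nonneg (fun x hx => ?_) x
  have h1 := hx.1
  have h2 : 0 ≤ 1 - ∑ i, x i := sub_nonneg.mpr hx.2
  exact mul_nonneg (Finset.prod_nonneg fun i _ => Real.rpow_nonneg (h1 i) _) (Real.rpow_nonneg h2 _)

lemma dirDens_measurable {m : ℕ} (β : Fin (m + 1) → ℝ) : Measurable (dirichletDensity m β) := by
  unfold dirichletDensity
  refine Measurable.indicator (by fun_prop) ?_
  have h1 : MeasurableSet {x : Fin m → ℝ | ∀ i, 0 ≤ x i} := by
    have : {x : Fin m → ℝ | ∀ i, 0 ≤ x i} = ⋂ i, {x | 0 ≤ x i} := by ext; simp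
    rw [this]
    exact MeasurableSet.iInter fun i => measurableSet_le measurable_const (measurable_pi_apply i)
  have h2 : MeasurableSet {x : Fin m → ℝ | ∑ i, x i ≤ 1} := measurableSet_le (by fun_prop) measurable_const
  exact h1.inter h2

lemma lint_gamma {s : ℝ} (hs : 0 < s) : ∫⁻ r in Ioi (0 : ℝ), ENNReal.ofReal (r ^ (s - 1) * Real.exp (-r)) = ENNReal.ofReal (Real.Gamma s) := by
  have h := Real.integral_rpow_mul_exp_neg_mul_Ioi hs (zero_lt_one)
  have hi : IntegrableOn (fun r : ℝ => r ^ (s - 1) * Real.exp (-r)) (Ioi 0) := by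
    have := integrableOn_rpow_mul_exp_neg_mul_rpow (p := 1) (s := s - 1) (b := 1) (by linarith) one_pos one_pos
    refine this.congr_fun (fun x _ => ?_) measurableSet_Ioi
    simp
  rw [← ofReal_integral_eq_lintegral_ofReal hi]
  · congr 1
    simpa using h
  · refine (ae_restrict_iff' measurableSet_Ioi).mpr (Filter.Eventually.of_forall fun r hr => ?_)
    have : (0:ℝ) < r := hr
    simp only [Pi.zero_apply]
    positivity

lemma lemmaA {m : ℕ} (β : Fin (m + 1) → ℝ) {s : ℝ} (hs : 0 < s) (H : (Fin (m + 1) → ℝ) → ℝ≥0∞) (hH : Measurable H)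
    (hhom : ∀ r : ℝ, 0 < r → ∀ w, H (fun j => r * w j) = H w) :
    ENNReal.ofReal (Real.Gamma s) * ∫⁻ x : Fin m → ℝ, H (Fin.snoc x (1 - ∑ i, x i)) * ENNReal.ofReal (dirichletDensity m β x)
      = ∫⁻ G, H G * ENNReal.ofReal (∏ j, gd (β j) (G j)) * ENNReal.ofReal ((∑ j, G j) ^ (s - ∑ j, β j)) := by
  set Φ : (Fin (m + 1) → ℝ) → ℝ≥0∞ := fun G => H G * ENNReal.ofReal (∏ j, gd (β j) (G j)) * ENNReal.ofReal ((∑ j, G j) ^ (s - ∑ j, β j)) with hΦ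
  have hΦm : Measurable Φ := by
    have : ∀ j, Measurable (gd (β j)) := fun j => gd_measurable _
    refine (hH.mul (Measurable.ennreal_ofReal (Finset.measurable_prod _ fun j _ => (this j).comp (measurable_pi_apply j)))).mul
      (Measurable.ennreal_ofReal (by fun_prop))
  rw [lint_snoc hΦm]
  have h1 : ∀ y : Fin m → ℝ, ∫⁻ g : ℝ, Φ (Fin.snoc y g) = ∫⁻ r : ℝ, Φ (Fin.snoc y (r - ∑ i, y i)) := by
    intro y
    exact (lintegral_sub_right_eq_self (μ := (volume : Measure ℝ)) (fun g => Φ (Fin.snoc y g)) (∑ i, y i)).symm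
  simp_rw [h1]
  rw [lintegral_lintegral_swap]
  swap
  · have : Measurable fun q : (Fin m → ℝ) × ℝ => (q.1, q.2 - ∑ i, q.1 i) := by fun_prop
    exact (hΦm.comp ((measurable_snoc m).comp this)).aemeasurable
  have h2 : ∀ r : ℝ, r ≠ 0 → ∫⁻ y : Fin m → ℝ, Φ (Fin.snoc y (r - ∑ i, y i)) =
      (Ioi (0 : ℝ)).indicator (fun r => ENNReal.ofReal (r ^ (s - 1) * Real.exp (-r)) *
        ∫⁻ x : Fin m → ℝ, H (Fin.snoc x (1 - ∑ i, x i)) * ENNReal.ofReal (dirichletDensity m β x)) r := by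
    intro r hr0
    rcases lt_or_gt_of_ne hr0 with hr | hr
    · rw [indicator_of_notMem (by simp [hr.le])]
      have : ∀ y : Fin m → ℝ, Φ (Fin.snoc y (r - ∑ i, y i)) = 0 := by
        intro y
        set G : Fin (m + 1) → ℝ := Fin.snoc y (r - ∑ i, y i) with hG
        have hsum : ∑ j, G j = r := by rw [Fin.sum_univ_castSucc]; simp [hG]
        have : ∃ j, G j < 0 := by
          by_contra hc
          push Not at hc
          have := Finset.sum_nonneg fun j (_ : j ∈ Finset.univ) => hc j
          linarith
        obtain ⟨j, hj⟩ := this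
        simp only [hΦ]
        rw [Finset.prod_eq_zero (Finset.mem_univ j) (gd_neg _ hj)]
        simp
      simp [this]
    · have hr' : 0 < r := hr
      rw [indicator_of_mem (show r ∈ Ioi 0 from hr)]
      have hmm : Measurable fun y : Fin m → ℝ => Φ (Fin.snoc y (r - ∑ i, y i)) := by
        have : Measurable fun q : (Fin m → ℝ) => (q, r - ∑ i, q i) := by fun_prop
        exact hΦm.comp ((measurable_snoc m).comp this)
      rw [lint_smul hmm hr', ← lintegral_const_mul' _ _ ENNReal.ofReal_ne_top, ← lintegral_const_mul' _ _ ENNReal.ofReal_ne_top]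
      congr 1; ext x
      have e1 : (Fin.snoc (r • x) (r - ∑ i, (r • x) i) : Fin (m + 1) → ℝ) = fun j => r * (Fin.snoc x (1 - ∑ i, x i) : Fin (m + 1) → ℝ) j := by
        ext j
        refine Fin.lastCases ?_ (fun i => ?_) j
        · simp [← Finset.mul_sum]; ring
        · simp
      rw [e1]
      simp only [hΦ]
      rw [hhom r hr', prod_gd_scale β hr' x]
      have hws : ∑ j, r * (Fin.snoc x (1 - ∑ i, x i) : Fin (m + 1) → ℝ) j = r := by
        rw [← Finset.mul_sum, Fin.sum_univ_castSucc]; simp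
      rw [hws]
      have hd := dirDens_nonneg β x
      rw [ENNReal.ofReal_mul (by positivity)]
      have e2 : ENNReal.ofReal (r ^ (s - 1) * Real.exp (-r)) = ENNReal.ofReal (r ^ m) * ENNReal.ofReal (r ^ (∑ j, β j - (m + 1)) * Real.exp (-r)) * ENNReal.ofReal (r ^ (s - ∑ j, β j)) := by
        rw [← ENNReal.ofReal_mul (by positivity), ← ENNReal.ofReal_mul (by positivity)]
        congr 1
        rw [← Real.rpow_natCast r m]
        have : s - 1 = m + (∑ j, β j - (m + 1)) + (s - ∑ j, β j) := by ring
        rw [this, Real.rpow_add hr', Real.rpow_add hr']; ring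
      rw [e2]; ring
  have h3 : ∫⁻ r : ℝ, ∫⁻ y : Fin m → ℝ, Φ (Fin.snoc y (r - ∑ i, y i)) = ∫⁻ r, (Ioi (0 : ℝ)).indicator (fun r => ENNReal.ofReal (r ^ (s - 1) * Real.exp (-r)) *
        ∫⁻ x : Fin m → ℝ, H (Fin.snoc x (1 - ∑ i, x i)) * ENNReal.ofReal (dirichletDensity m β x)) r := by
    apply lintegral_congr_ae
    have : ∀ᵐ x : ℝ, x ≠ 0 := by simp [ae_iff]
    filter_upwards [this] with r hr using h2 r hr
  rw [h3, lintegral_indicator measurableSet_Ioi, lintegral_mul_const _ (by fun_prop), lint_gamma hs]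


lemma gd_integrable {a : ℝ} (ha : 0 < a) : Integrable (gd a) := by
  simpa using gd_mul_exp_integrable ha (t := 0) (by norm_num)

lemma gd_integral {a : ℝ} (ha : 0 < a) : ∫ x, gd a x = Real.Gamma a := by
  simpa using gd_mul_exp_integral ha (t := 0) (by norm_num)

lemma lint_prod_gd {m : ℕ} (β : Fin (m + 1) → ℝ) (hβ : ∀ j, 0 < β j) :
    ∫⁻ G : Fin (m + 1) → ℝ, ENNReal.ofReal (∏ j, gd (β j) (G j)) = ENNReal.ofReal (∏ j, Real.Gamma (β j)) := by
  rw [← ofReal_integral_eq_lintegral_ofReal]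
  · rw [integral_fintype_prod_volume_eq_prod (fun j x => gd (β j) x)]
    simp_rw [gd_integral (hβ _)]
  · exact Integrable.fintype_prod (f := fun j x => gd (β j) x) fun j => gd_integrable (hβ j)
  · exact Filter.Eventually.of_forall fun G => Finset.prod_nonneg fun j _ => gd_nonneg _ _

lemma base_univ {m : ℕ} (β : Fin (m + 1) → ℝ) (hβ : ∀ j, 0 < β j) :
    ENNReal.ofReal (Real.Gamma (∑ j, β j)) * dirichletBase m β univ = ENNReal.ofReal (∏ j, Real.Gamma (β j)) := by
  have hs : 0 < ∑ j, β j := Finset.sum_pos (fun j _ => hβ j) Finset.univ_nonempty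
  have := lemmaA β hs (fun _ => 1) measurable_const (fun _ _ _ => rfl)
  simp only [one_mul, sub_self, Real.rpow_zero, ENNReal.ofReal_one, mul_one] at this
  rw [lint_prod_gd β hβ] at this
  rw [← this, dirichletBase, withDensity_apply _ MeasurableSet.univ, Measure.restrict_univ]

lemma dirichlet_apply {m : ℕ} (β : Fin (m + 1) → ℝ) {T : Set (Fin (m + 1) → ℝ)} (hT : MeasurableSet T) :
    dirichlet m β T = (dirichletBase m β univ)⁻¹ * dirichletBase m β ((fun x : Fin m → ℝ => Fin.snoc x (1 - ∑ i, x i)) ⁻¹' T) := by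
  unfold dirichlet
  have hm : Measurable (fun x : Fin m → ℝ => (Fin.snoc x (1 - ∑ i, x i) : Fin (m + 1) → ℝ)) := by
    have : Measurable fun q : (Fin m → ℝ) => (q, 1 - ∑ i, q i) := by fun_prop
    exact (measurable_snoc m).comp this
  rw [Measure.map_apply hm hT]
  rfl

lemma base_ne {m : ℕ} (β : Fin (m + 1) → ℝ) (hβ : ∀ j, 0 < β j) :
    dirichletBase m β univ ≠ 0 ∧ dirichletBase m β univ ≠ ∞ := by
  have h := base_univ β hβ
  have hs : 0 < ∑ j, β j := Finset.sum_pos (fun j _ => hβ j) Finset.univ_nonempty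
  have hG := Real.Gamma_pos_of_pos hs
  have hP : 0 < ∏ j, Real.Gamma (β j) := Finset.prod_pos fun j _ => Real.Gamma_pos_of_pos (hβ j)
  constructor
  · intro h0
    rw [h0, mul_zero] at h
    exact absurd h.symm (by simpa using hP)
  · intro h0
    rw [h0, ENNReal.mul_top (by simpa using hG)] at h
    exact ENNReal.ofReal_ne_top h.symm

lemma dirichlet_univ {m : ℕ} (β : Fin (m + 1) → ℝ) (hβ : ∀ j, 0 < β j) : dirichlet m β univ = 1 := by
  rw [dirichlet_apply β MeasurableSet.univ, preimage_univ]
  exact ENNReal.inv_mul_cancel (base_ne β hβ).1 (base_ne β hβ).2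

lemma dirichlet_eq_lint {m : ℕ} (β : Fin (m + 1) → ℝ) (hβ : ∀ j, 0 < β j) (f : Fin (m + 1) → ℝ) {A : ℝ} (hA : 0 < A)
    (hAs : ∑ j, β j = A + 1) {B : Set ℝ} (hB : MeasurableSet B) :
    dirichlet m β {w | ∑ j, f j * w j ∈ B} = ENNReal.ofReal (A / ∏ j, Real.Gamma (β j)) *
      ∫⁻ G : Fin (m + 1) → ℝ, B.indicator 1 ((∑ j, f j * G j) / ∑ j, G j) * ENNReal.ofReal (∏ j, gd (β j) (G j)) * ENNReal.ofReal ((∑ j, G j)⁻¹) := by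
  have hT : MeasurableSet {w : Fin (m + 1) → ℝ | ∑ j, f j * w j ∈ B} := by
    have : Measurable fun w : Fin (m + 1) → ℝ => ∑ j, f j * w j := by fun_prop
    exact this hB
  rw [dirichlet_apply β hT]
  set H : (Fin (m + 1) → ℝ) → ℝ≥0∞ := fun G => B.indicator 1 ((∑ j, f j * G j) / ∑ j, G j) with hH
  have hHm : Measurable H := by
    have : Measurable fun w : Fin (m + 1) → ℝ => (∑ j, f j * w j) / ∑ j, w j := by fun_prop
    exact (measurable_one.indicator hB).comp this
  have hL := lemmaA β hA H hHm (by
    intro r hr w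
    simp only [hH]
    have : (∑ j, f j * (r * w j)) / ∑ j, r * w j = (∑ j, f j * w j) / ∑ j, w j := by
      simp_rw [mul_left_comm (f _) r, ← Finset.mul_sum]
      rw [mul_div_mul_left _ _ hr.ne']
    rw [this])
  have e1 : A - ∑ j, β j = -1 := by rw [hAs]; ring
  simp only [e1, Real.rpow_neg_one] at hL
  rw [← hL]
  have hm : Measurable (fun x : Fin m → ℝ => (Fin.snoc x (1 - ∑ i, x i) : Fin (m + 1) → ℝ)) := by
    have : Measurable fun q : (Fin m → ℝ) => (q, 1 - ∑ i, q i) := by fun_prop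
    exact (measurable_snoc m).comp this
  have e2 : dirichletBase m β ((fun x : Fin m → ℝ => (Fin.snoc x (1 - ∑ i, x i) : Fin (m + 1) → ℝ)) ⁻¹' {w | ∑ j, f j * w j ∈ B})
      = ∫⁻ x : Fin m → ℝ, H (Fin.snoc x (1 - ∑ i, x i)) * ENNReal.ofReal (dirichletDensity m β x) := by
    rw [dirichletBase, withDensity_apply _ (hm hT), ← lintegral_indicator (hm hT)]
    congr 1; ext x
    simp only [hH]
    have hws : ∑ j, (Fin.snoc x (1 - ∑ i, x i) : Fin (m + 1) → ℝ) j = 1 := by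
      rw [Fin.sum_univ_castSucc]; simp
    rw [hws, div_one]
    by_cases h : ∑ j, f j * (Fin.snoc x (1 - ∑ i, x i) : Fin (m + 1) → ℝ) j ∈ B
    · rw [indicator_of_mem h, indicator_of_mem (by exact h)]; simp
    · rw [indicator_of_notMem h, indicator_of_notMem (by exact h)]; simp
  rw [e2, ← mul_assoc]
  congr 1
  have hb := base_univ β hβ
  rw [hAs, Real.Gamma_add_one hA.ne'] at hb
  have hG := Real.Gamma_pos_of_pos hA
  have hP : 0 < ∏ j, Real.Gamma (β j) := Finset.prod_pos fun j _ => Real.Gamma_pos_of_pos (hβ j)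
  obtain ⟨h1, h2⟩ := base_ne β hβ
  symm
  apply ENNReal.eq_inv_of_mul_eq_one_left
  rw [ENNReal.ofReal_div_of_pos hP, ← hb, ENNReal.ofReal_mul hA.le]
  rw [div_eq_mul_inv, ENNReal.mul_inv (Or.inr h2) (Or.inr h1), ENNReal.mul_inv (by simp [hA]) (by simp)]
  have hA0 : ENNReal.ofReal A ≠ 0 := by simpa using hA
  have hG0 : ENNReal.ofReal (Real.Gamma A) ≠ 0 := by simpa using hG
  calc _ = (ENNReal.ofReal A * (ENNReal.ofReal A)⁻¹) * (ENNReal.ofReal (Real.Gamma A) * (ENNReal.ofReal (Real.Gamma A))⁻¹) * (dirichletBase m β univ * (dirichletBase m β univ)⁻¹) := by ring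
    _ = 1 := by
      rw [ENNReal.mul_inv_cancel hA0 ENNReal.ofReal_ne_top, ENNReal.mul_inv_cancel hG0 ENNReal.ofReal_ne_top, ENNReal.mul_inv_cancel h1 h2]; simp


/-- one-dimensional change of variables `g = Y / u - X`. -/
lemma cov_one {a X Y : ℝ} (hX : 0 < X) (hY : 0 < Y) {B : Set ℝ} :
    ∫⁻ g : ℝ, B.indicator 1 (Y / (g + X)) * ENNReal.ofReal (gd a g) * ENNReal.ofReal ((g + X)⁻¹)
      = ∫⁻ u in Ioi (0 : ℝ), B.indicator 1 u * ENNReal.ofReal (u⁻¹) * ENNReal.ofReal (gd a ((Y - u * X) / u)) := by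
  have h1 : ∫⁻ g : ℝ, B.indicator 1 (Y / (g + X)) * ENNReal.ofReal (gd a g) * ENNReal.ofReal ((g + X)⁻¹)
      = ∫⁻ g in Ioi (-X), B.indicator 1 (Y / (g + X)) * ENNReal.ofReal (gd a g) * ENNReal.ofReal ((g + X)⁻¹) := by
    rw [← lintegral_indicator measurableSet_Ioi]
    congr 1; ext g
    by_cases h : g ∈ Ioi (-X)
    · rw [indicator_of_mem h]
    · rw [indicator_of_notMem h, gd_neg a (by simp at h; linarith)]; simp
  rw [h1]
  have himg : (fun u : ℝ => Y / u - X) '' Ioi 0 = Ioi (-X) := by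
    ext g
    simp only [mem_image, mem_Ioi]
    constructor
    · rintro ⟨u, hu, rfl⟩
      have : 0 < Y / u := by positivity
      linarith
    · intro h
      have : 0 < g + X := by linarith
      exact ⟨Y / (g + X), by positivity, by field_simp; ring⟩
  rw [← himg, lintegral_image_eq_lintegral_abs_deriv_mul (f' := fun u => -(Y / u ^ 2)) measurableSet_Ioi]
  · refine setLIntegral_congr_fun measurableSet_Ioi fun u hu => ?_
    have hu : 0 < u := hu
    have e1 : Y / u - X + X = Y / u := by ring
    have e2 : Y / (Y / u) = u := by field_simp
    have e3 : Y / u - X = (Y - u * X) / u := by field_simp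
    rw [e1, e2, e3, abs_neg, abs_of_pos (by positivity)]
    have e4 : ENNReal.ofReal u⁻¹ = ENNReal.ofReal (Y / u ^ 2) * ENNReal.ofReal ((Y / u)⁻¹) := by
      rw [← ENNReal.ofReal_mul (by positivity)]; congr 1; field_simp
    rw [e4]; ring
  · intro u hu
    have hu : 0 < u := hu
    apply HasDerivAt.hasDerivWithinAt
    refine (((hasDerivAt_const u Y).fun_div (hasDerivAt_id' u) hu.ne').sub_const X).congr_deriv ?_
    simp; ring
  · intro u hu v hv h
    have hu : 0 < u := hu
    have hv : 0 < v := hv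
    simp only [sub_left_inj] at h
    field_simp at h
    linarith

lemma dirichlet_eq_J {m : ℕ} (hm : 1 ≤ m) (α f : Fin (m + 1) → ℝ) (hα : ∀ j, 0 < α j) {b : ℝ} (hb : 0 < b)
    (hf : ∀ i, f i ∈ Set.Icc (0 : ℝ) b) (hf0 : f 0 = 0) (hfm : f (Fin.last m) = b)
    (hI : ∀ u ∈ Ioo 0 b, Integrable (fun G : Fin m → ℝ => (∏ j, gd (α j.succ) (G j)) * gd (α 0 + 1) ((∑ j, (f j.succ - u) * G j) / u)))
    {B : Set ℝ} (hB : MeasurableSet B) :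
    dirichlet m (Function.update α 0 (α 0 + 1)) {w | ∑ j, f j * w j ∈ B} =
      ENNReal.ofReal ((∑ j, α j) / (Real.Gamma (α 0 + 1) * ∏ j : Fin m, Real.Gamma (α j.succ))) *
      ∫⁻ u in Ioo 0 b, B.indicator 1 u * ENNReal.ofReal (u⁻¹ * Jf α f u) := by
  set β := Function.update α 0 (α 0 + 1) with hβ
  have hβ0 : β 0 = α 0 + 1 := by simp [hβ]
  have hβs : ∀ j : Fin m, β j.succ = α j.succ := fun j => by simp [hβ]
  have hβp : ∀ j, 0 < β j := by
    intro j; refine Fin.cases ?_ (fun i => ?_) j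
    · rw [hβ0]; linarith [hα 0]
    · rw [hβs]; exact hα _
  have hA : 0 < ∑ j, α j := Finset.sum_pos (fun j _ => hα j) Finset.univ_nonempty
  have hAs : ∑ j, β j = ∑ j, α j + 1 := by
    rw [Fin.sum_univ_succ, Fin.sum_univ_succ (f := α)]; simp only [hβ0, hβs]; ring
  rw [dirichlet_eq_lint β hβp f hA hAs hB]
  have hpr : ∏ j, Real.Gamma (β j) = Real.Gamma (α 0 + 1) * ∏ j : Fin m, Real.Gamma (α j.succ) := by
    rw [Fin.prod_univ_succ]; simp only [hβ0, hβs]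
  rw [hpr]
  congr 1
  have hgm : ∀ a, Measurable (gd a) := gd_measurable
  have hind : Measurable (B.indicator (1 : ℝ → ℝ≥0∞)) := measurable_one.indicator hB
  rw [lint_cons]
  swap
  · refine (Measurable.mul (hind.comp (by fun_prop)) (Measurable.ennreal_ofReal (Finset.measurable_prod _ fun j _ => (hgm _).comp (measurable_pi_apply j)))).mul
      (Measurable.ennreal_ofReal (by fun_prop))
  -- the inner integral
  obtain ⟨k, rfl⟩ : ∃ k, m = k + 1 := ⟨m - 1, by omega⟩
  have hnull : ∀ᵐ y : Fin (k + 1) → ℝ, y (Fin.last k) ≠ 0 := by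
    rw [ae_iff]
    simp only [not_not]
    exact Measure.pi_hyperplane (fun _ => (volume : Measure ℝ)) (Fin.last k) 0
  have hfb : f (Fin.last k).succ = b := by rw [← hfm]; rfl
  have h1 : ∀ᵐ y : Fin (k + 1) → ℝ, (∫⁻ g : ℝ, B.indicator 1 ((∑ j, f j * (Fin.cons g y : Fin (k + 2) → ℝ) j) / ∑ j, (Fin.cons g y : Fin (k + 2) → ℝ) j) *
      ENNReal.ofReal (∏ j, gd (β j) ((Fin.cons g y : Fin (k + 2) → ℝ) j)) * ENNReal.ofReal ((∑ j, (Fin.cons g y : Fin (k + 2) → ℝ) j)⁻¹))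
      = ∫⁻ u in Ioi (0 : ℝ), B.indicator 1 u * ENNReal.ofReal (u⁻¹) * ENNReal.ofReal ((∏ j, gd (α j.succ) (y j)) * gd (α 0 + 1) ((∑ j, (f j.succ - u) * y j) / u)) := by
    filter_upwards [hnull] with y hy
    simp only [Fin.sum_univ_succ (n := k + 1), Fin.prod_univ_succ (n := k + 1), Fin.cons_zero, Fin.cons_succ, hβ0, hβs, hf0, zero_mul, zero_add]
    by_cases hneg : ∃ j, y j < 0
    · obtain ⟨j, hj⟩ := hneg
      have : ∏ j, gd (α j.succ) (y j) = 0 := Finset.prod_eq_zero (Finset.mem_univ j) (gd_neg _ hj)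
      simp [this]
    · push Not at hneg
      have hyl : 0 < y (Fin.last k) := lt_of_le_of_ne (hneg _) (Ne.symm hy)
      have hX : 0 < ∑ j, y j := Finset.sum_pos' (fun j _ => hneg j) ⟨Fin.last k, Finset.mem_univ _, hyl⟩
      have hY : 0 < ∑ j : Fin (k + 1), f j.succ * y j := Finset.sum_pos' (fun j _ => mul_nonneg (hf _).1 (hneg j))
        ⟨Fin.last k, Finset.mem_univ _, by rw [hfb]; positivity⟩
      have hP : 0 ≤ ∏ j, gd (α j.succ) (y j) := Finset.prod_nonneg fun j _ => gd_nonneg _ _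
      have h2 := cov_one (a := α 0 + 1) hX hY (B := B)
      have e1 : ∀ u, ∑ j : Fin (k + 1), (f j.succ - u) * y j = (∑ j : Fin (k + 1), f j.succ * y j) - u * ∑ j, y j := by
        intro u; rw [Finset.mul_sum, ← Finset.sum_sub_distrib]; refine Finset.sum_congr rfl fun j _ => by ring
      simp_rw [e1, ENNReal.ofReal_mul hP]
      set P := ENNReal.ofReal (∏ j, gd (α j.succ) (y j)) with hPd
      have hPt : P ≠ ∞ := ENNReal.ofReal_ne_top
      have l1 : ∀ g : ℝ, B.indicator 1 ((∑ j : Fin (k + 1), f j.succ * y j) / (g + ∑ j, y j)) * ENNReal.ofReal (gd (α 0 + 1) g * ∏ j, gd (α j.succ) (y j)) * ENNReal.ofReal ((g + ∑ j, y j)⁻¹)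
        = P * (B.indicator 1 ((∑ j : Fin (k + 1), f j.succ * y j) / (g + ∑ j, y j)) * ENNReal.ofReal (gd (α 0 + 1) g) * ENNReal.ofReal ((g + ∑ j, y j)⁻¹)) := by
        intro g; rw [ENNReal.ofReal_mul (gd_nonneg _ _)]; ring
      simp_rw [l1]
      rw [lintegral_const_mul' _ _ hPt, h2, ← lintegral_const_mul' _ _ hPt]
      congr 1; ext u; ring
  rw [lintegral_congr_ae h1, lintegral_lintegral_swap]
  swap
  · apply Measurable.aemeasurable
    refine Measurable.mul ((hind.comp measurable_snd).mul (Measurable.ennreal_ofReal (by fun_prop))) (Measurable.ennreal_ofReal (Measurable.mul ?_ ?_))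
    · exact Finset.measurable_prod _ fun j _ => (hgm _).comp ((measurable_pi_apply j).comp measurable_fst)
    · exact (hgm _).comp (by fun_prop)
  rw [← Ioo_union_Ici_eq_Ioi hb, lintegral_union measurableSet_Ici (by
    rw [Set.disjoint_left]; intro x hx hx'; exact absurd hx.2 (not_lt.mpr hx'))]
  have hz : ∫⁻ u in Ici b, ∫⁻ y : Fin (k + 1) → ℝ, B.indicator 1 u * ENNReal.ofReal (u⁻¹) * ENNReal.ofReal ((∏ j, gd (α j.succ) (y j)) * gd (α 0 + 1) ((∑ j, (f j.succ - u) * y j) / u)) = 0 := by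
    rw [setLIntegral_congr_fun (g := fun _ => 0) measurableSet_Ici]
    · simp
    intro u hu
    have hu : b ≤ u := hu
    have : ∀ y : Fin (k + 1) → ℝ, (∏ j, gd (α j.succ) (y j)) * gd (α 0 + 1) ((∑ j, (f j.succ - u) * y j) / u) = 0 := by
      intro y
      by_cases hneg : ∃ j, y j < 0
      · obtain ⟨j, hj⟩ := hneg
        rw [Finset.prod_eq_zero (Finset.mem_univ j) (gd_neg _ hj), zero_mul]
      · push Not at hneg
        have hle : (∑ j : Fin (k + 1), (f j.succ - u) * y j) / u ≤ 0 := by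
          apply div_nonpos_of_nonpos_of_nonneg _ (by linarith)
          exact Finset.sum_nonpos fun j _ => mul_nonpos_of_nonpos_of_nonneg (by linarith [(hf j.succ).2]) (hneg j)
        rcases hle.lt_or_eq with h | h
        · rw [gd_neg _ h, mul_zero]
        · rw [h, gd, if_pos le_rfl, Real.zero_rpow (by linarith [hα 0]), zero_mul, mul_zero]
    simp [this]
  rw [hz, add_zero]
  refine setLIntegral_congr_fun measurableSet_Ioo fun u hu => ?_
  rw [lintegral_const_mul _ (by
    refine Measurable.ennreal_ofReal (Measurable.mul ?_ ?_)
    · exact Finset.measurable_prod _ fun j _ => (hgm _).comp (measurable_pi_apply j)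
    · exact (hgm _).comp (by fun_prop))]
  rw [← ofReal_integral_eq_lintegral_ofReal (hI u hu)]
  · rw [mul_assoc, ENNReal.ofReal_mul (by have := hu.1; positivity)]; rfl
  · exact Filter.Eventually.of_forall fun y => mul_nonneg (Finset.prod_nonneg fun j _ => gd_nonneg _ _) (gd_nonneg _ _)


def hfun {m : ℕ} (p f α : Fin (m + 1) → ℝ) (A κ : ℝ) : ℝ :=
  Real.sqrt (A * Vf p f κ) / Mf p f κ * Real.exp (-(A * Kf p f κ)) / (2 * π) * (Iint α (af p f A κ) (af p f A κ 0)).re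

lemma dirichlet_eq_kappa {m : ℕ} (hm : 1 ≤ m) {p f : Fin (m + 1) → ℝ} {b : ℝ} (C : Ctx p f b) {A : ℝ} (hA : 0 < A)
    (α : Fin (m + 1) → ℝ) (hα : ∀ j, α j = A * p j) (hα0 : 1 ≤ α 0) {B S : Set ℝ} (hB : MeasurableSet B)
    (hS : MeasurableSet S) (hSs : S ⊆ Iio (1 / b)) (hSB : uf p f '' S = B ∩ Ioo 0 b) :
    dirichlet m (Function.update α 0 (α 0 + 1)) {w | ∑ j, f j * w j ∈ B} =
      ∫⁻ κ in S, ENNReal.ofReal (hfun p f α A κ) := by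
  have hαp : ∀ j, 0 < α j := fun j => by rw [hα]; exact mul_pos hA (C.hp j)
  rw [dirichlet_eq_J hm α f hαp C.hb C.hf C.hf0 C.hfm ?_ hB]
  swap
  · intro u hu
    obtain ⟨κ, hκ, rfl⟩ := C.u_surj hu.1 hu.2
    exact (Jf_eq C hA α hα hα0 hκ).1
  have hAs : ∑ j, α j = A := by simp_rw [hα, ← Finset.mul_sum, C.hs, mul_one]
  rw [hAs]
  have e1 : ∫⁻ u in Ioo 0 b, B.indicator 1 u * ENNReal.ofReal (u⁻¹ * Jf α f u) = ∫⁻ u in uf p f '' S, ENNReal.ofReal (u⁻¹ * Jf α f u) := by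
    rw [hSB, ← lintegral_indicator measurableSet_Ioo, ← lintegral_indicator (hB.inter measurableSet_Ioo)]
    congr 1; ext u
    by_cases h1 : u ∈ Ioo 0 b <;> by_cases h2 : u ∈ B <;> simp [h1, h2]
  rw [e1, lintegral_image_eq_lintegral_abs_deriv_mul hS (f' := fun κ => Vf p f κ / Mf p f κ ^ 2)
    (fun κ hκ => (C.u_deriv (hSs hκ)).hasDerivWithinAt) (C.u_mono.injOn.mono hSs),
    ← lintegral_const_mul' _ _ ENNReal.ofReal_ne_top]
  refine setLIntegral_congr_fun hS fun κ hκ => ?_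
  have hκ' := hSs hκ
  have hup := C.u_pos hκ'
  have hMp := C.M_pos hκ'
  have hVp := C.V_pos hκ'
  have hGp : 0 < Real.Gamma (α 0 + 1) * ∏ j : Fin m, Real.Gamma (α j.succ) :=
    mul_pos (Real.Gamma_pos_of_pos (by linarith [hαp 0])) (Finset.prod_pos fun j _ => Real.Gamma_pos_of_pos (hαp _))
  change ENNReal.ofReal _ * (ENNReal.ofReal _ * ENNReal.ofReal _) = ENNReal.ofReal _
  rw [abs_of_pos (by positivity), ← ENNReal.ofReal_mul (by positivity), ← ENNReal.ofReal_mul (by positivity)]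
  congr 1
  rw [(Jf_eq C hA α hα hα0 hκ').2]
  unfold hfun
  have hSq : Real.sqrt (A * Vf p f κ) ^ 2 = A * Vf p f κ := Real.sq_sqrt (by positivity)
  have hSp : 0 < Real.sqrt (A * Vf p f κ) := Real.sqrt_pos.mpr (by positivity)
  generalize Real.sqrt (A * Vf p f κ) = s at *
  generalize Real.Gamma (α 0 + 1) * ∏ j : Fin m, Real.Gamma (α j.succ) = g at *
  generalize (Iint α (af p f A κ) (af p f A κ 0)).re = I
  generalize Real.exp (-(A * Kf p f κ)) = e
  generalize Mf p f κ = M at *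
  generalize uf p f κ = u at *
  generalize Vf p f κ = V at *
  field_simp
  rw [hSq]

lemma c0_ge : 256 ≤ c0 := by
  unfold c0
  have h1 : (2.4 : ℝ) ≤ Real.sqrt 6 := Real.le_sqrt_of_sq_le (by norm_num)
  have h2 : (21 : ℝ) ≤ 8 + 49 * Real.sqrt 6 / 9 := by linarith
  have h3 := Real.pi_lt_d2
  have h4 := Real.pi_pos
  rw [div_mul_eq_mul_div, le_div_iff₀ h4]
  nlinarith

lemma Iint_re_bound {m : ℕ} {p f : Fin (m + 1) → ℝ} {b : ℝ} (C : Ctx p f b) {A : ℝ} (hA : 0 < A)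
    (α : Fin (m + 1) → ℝ) (hα : ∀ j, α j = A * p j) {ε : ℝ} (hε : ε ∈ Set.Ioo (0 : ℝ) 1)
    (hmin : c0 / ε ^ 2 ≤ min (α 0) (α (Fin.last m))) {κ : ℝ} (hκ : κ < 1 / b) :
    |(Iint α (af p f A κ) (af p f A κ 0)).re - Real.sqrt (2 * π)| ≤ ε * Real.sqrt (2 * π) := by
  obtain ⟨hε0, hε1⟩ := hε
  have hαp : ∀ j, 0 < α j := fun j => by rw [hα]; exact mul_pos hA (C.hp j)
  have hVp := C.V_pos hκ
  set S := Real.sqrt (A * Vf p f κ) with hS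
  have hSp : 0 < S := Real.sqrt_pos.mpr (by positivity)
  have hSq : S ^ 2 = A * Vf p f κ := Real.sq_sqrt (by positivity)
  have h1 : ∑ j, α j * af p f A κ j = 0 := by
    have : ∀ j, α j * af p f A κ j = A / S * (p j * zf f κ j) - A / S * Nf p f κ * p j := by
      intro j; unfold af; rw [hα, ← hS]; ring
    simp_rw [this, Finset.sum_sub_distrib, ← Finset.mul_sum, C.hs]
    unfold Nf; ring
  have h2 : ∑ j, α j * af p f A κ j ^ 2 = 1 := by
    have : ∀ j, α j * af p f A κ j ^ 2 = A / S ^ 2 * (p j * (zf f κ j - Nf p f κ) ^ 2) := by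
      intro j; unfold af; rw [hα, ← hS, div_pow]; ring
    simp_rw [this, ← Finset.mul_sum, ← C.V_eq, hSq]
    field_simp
  have h256 : 256 / ε ^ 2 ≤ min (α 0) (α (Fin.last m)) := le_trans (by gcongr; exact c0_ge) hmin
  have key : ∀ i, 256 / ε ^ 2 ≤ α i → |zf f κ i - Nf p f κ| / S ≤ ε / 16 := by
    intro i hi
    rw [div_le_iff₀ hSp]
    refine abs_le_of_sq_le_sq ?_ (by positivity)
    rw [mul_pow, hSq]
    have hv := C.V_ge κ i
    have : 256 / ε ^ 2 * (zf f κ i - Nf p f κ) ^ 2 ≤ A * Vf p f κ := by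
      calc _ ≤ α i * (zf f κ i - Nf p f κ) ^ 2 := by gcongr
        _ = A * (p i * (zf f κ i - Nf p f κ) ^ 2) := by rw [hα]; ring
        _ ≤ _ := by gcongr
    calc (zf f κ i - Nf p f κ) ^ 2 = (ε / 16) ^ 2 * (256 / ε ^ 2 * (zf f κ i - Nf p f κ) ^ 2) := by field_simp; norm_num
      _ ≤ _ := by gcongr
  have k0 := key 0 (h256.trans (min_le_left _ _))
  have kl := key (Fin.last m) (h256.trans (min_le_right _ _))
  rw [div_le_iff₀ hSp] at k0 kl
  have h3 : ∀ j, |af p f A κ j| ≤ ε / 16 := by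
    intro j
    unfold af
    rw [← hS, abs_div, abs_of_pos hSp, div_le_iff₀ hSp, abs_le]
    have a1 := (abs_le.mp k0).1
    have a2 := (abs_le.mp kl).2
    rw [C.z_zero] at a1
    constructor
    · linarith [C.z_nonneg hκ j]
    · linarith [C.z_le hκ j]
  have h4 := Iint_bound α (af p f A κ) (fun j => (hαp j).le) h1 h2 (ε / 16) (by linarith) h3 (af p f A κ 0) (h3 0)
  have h5 := (Complex.abs_re_le_norm _).trans h4
  rw [Complex.sub_re, Complex.ofReal_re] at h5
  refine h5.trans ?_
  have hpi := Real.pi_pos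
  have h6 : 3 / 4 * π ≤ Real.sqrt (2 * π) := Real.le_sqrt_of_sq_le (by nlinarith [Real.pi_lt_d2])
  nlinarith


namespace Ctx
variable {m : ℕ} {p f : Fin (m + 1) → ℝ} {b : ℝ}

lemma g_deriv (C : Ctx p f b) {A : ℝ} (hA : 0 < A) {κ : ℝ} (hκ : κ < 1 / b) (h0 : κ ≠ 0) :
    HasDerivAt (fun κ => Real.sqrt (2 * A * Kf p f κ)) (A * κ * Vf p f κ / (Mf p f κ * Real.sqrt (2 * A * Kf p f κ))) κ := by
  have hK := C.K_pos hκ h0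
  have h1 := ((C.K_deriv hκ).const_mul (2 * A)).sqrt (by positivity)
  refine h1.congr_deriv ?_
  have : 0 < Real.sqrt (2 * A * Kf p f κ) := Real.sqrt_pos.mpr (by positivity)
  have hM := C.M_pos hκ
  field_simp

end Ctx

lemma pdf_at {s x : ℝ} (hx : x ^ 2 = 2 * s) : gaussianPDF 0 1 x = ENNReal.ofReal (Real.exp (-s) / Real.sqrt (2 * π)) := by
  unfold gaussianPDF gaussianPDFReal
  congr 1
  simp only [NNReal.coe_one, mul_one, sub_zero, hx]
  rw [div_eq_mul_inv, mul_comm]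
  congr 2
  ring

lemma hfun_eq {m : ℕ} {p f α : Fin (m + 1) → ℝ} {A κ : ℝ} :
    hfun p f α A κ = Real.sqrt (A * Vf p f κ) / Mf p f κ * (Real.exp (-(A * Kf p f κ)) / Real.sqrt (2 * π)) *
      ((Iint α (af p f A κ) (af p f A κ 0)).re / Real.sqrt (2 * π)) := by
  unfold hfun
  have h : Real.sqrt (2 * π) ^ 2 = 2 * π := Real.sq_sqrt (by positivity)
  have hp : 0 < Real.sqrt (2 * π) := Real.sqrt_pos.mpr (by positivity)
  nth_rw 1 [← h]
  field_simp

lemma upper_pos {m : ℕ} (hm : 1 ≤ m) {p f : Fin (m + 1) → ℝ} {b : ℝ} (C : Ctx p f b) {A : ℝ} (hA : 0 < A)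
    (α : Fin (m + 1) → ℝ) (hα : ∀ j, α j = A * p j) (hα0 : 1 ≤ α 0) {ε : ℝ} (hε : ε ∈ Set.Ioo (0 : ℝ) 1)
    (hmin : c0 / ε ^ 2 ≤ min (α 0) (α (Fin.last m))) {κ0 : ℝ} (hκ0 : κ0 < 1 / b) (h0 : 0 ≤ κ0) :
    dirichlet m (Function.update α 0 (α 0 + 1)) {w | ∑ j, f j * w j ∈ Ici (uf p f κ0)} ≤
      ENNReal.ofReal (1 + ε) * gaussianReal 0 1 (Ici (Real.sqrt (2 * A * Kf p f κ0))) := by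
  rw [dirichlet_eq_kappa hm C hA α hα hα0 measurableSet_Ici (measurableSet_Ico (a := κ0) (b := 1 / b)) (fun x hx => hx.2)]
  swap
  · ext x
    simp only [mem_image, mem_Ico, mem_inter_iff, mem_Ici, mem_Ioo]
    constructor
    · rintro ⟨κ, ⟨h1, h2⟩, rfl⟩
      exact ⟨C.u_mono.monotoneOn hκ0 h2 h1, C.u_pos h2, C.u_lt h2⟩
    · rintro ⟨h1, h2, h3⟩
      obtain ⟨κ, hκ, rfl⟩ := C.u_surj h2 h3
      exact ⟨κ, ⟨(C.u_mono.le_iff_le hκ0 hκ).mp h1, hκ⟩, rfl⟩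
  rw [setLIntegral_congr Ioo_ae_eq_Ico.symm]
  set g : ℝ → ℝ := fun κ => Real.sqrt (2 * A * Kf p f κ) with hg
  have hpos : ∀ κ ∈ Ioo κ0 (1 / b), 0 < κ ∧ κ < 1 / b := fun κ hκ => ⟨lt_of_le_of_lt h0 hκ.1, hκ.2⟩
  have hmono : ∀ x, 0 ≤ x → ∀ y, y < 1 / b → x < y → g x < g y := by
    intro x hx y hy hxy
    have hK := C.K_mono ⟨hx, hxy.trans hy⟩ ⟨hx.trans hxy.le, hy⟩ hxy
    have hKx : 0 ≤ Kf p f x := by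
      rcases hx.eq_or_lt with h | h
      · rw [← h, Ctx.K_zero]
      · exact (C.K_pos (hxy.trans hy) h.ne').le
    exact Real.sqrt_lt_sqrt (by positivity) (by gcongr)
  have hmonoOn : StrictMonoOn g (Ioo κ0 (1 / b)) := fun x hx y hy hxy => hmono x (hpos x hx).1.le y hy.2 hxy
  have himg : g '' Ioo κ0 (1 / b) ⊆ Ici (g κ0) := by
    rintro _ ⟨κ, hκ, rfl⟩
    exact (hmono κ0 h0 κ hκ.2 hκ.1).le
  have hcov := lintegral_image_eq_lintegral_abs_deriv_mul (measurableSet_Ioo (a := κ0) (b := 1 / b))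
    (fun κ hκ => (C.g_deriv hA (hpos κ hκ).2 (hpos κ hκ).1.ne').hasDerivWithinAt) hmonoOn.injOn (gaussianPDF 0 1)
  calc ∫⁻ κ in Ioo κ0 (1 / b), ENNReal.ofReal (hfun p f α A κ)
      ≤ ∫⁻ κ in Ioo κ0 (1 / b), ENNReal.ofReal (1 + ε) * (ENNReal.ofReal |A * κ * Vf p f κ / (Mf p f κ * g κ)| * gaussianPDF 0 1 (g κ)) := by
        refine setLIntegral_mono' measurableSet_Ioo fun κ hκ => ?_
        obtain ⟨hk0, hk1⟩ := hpos κ hκ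
        have hK := C.K_pos hk1 hk0.ne'
        have hM := C.M_pos hk1
        have hV := C.V_pos hk1
        have hgs : g κ ^ 2 = 2 * (A * Kf p f κ) := by
          simp only [hg]; rw [Real.sq_sqrt (by positivity)]; ring
        have hgp : 0 < g κ := Real.sqrt_pos.mpr (by positivity)
        have hb1 := (abs_le.mp (Iint_re_bound C hA α hα hε hmin hk1)).2
        have hsp : 0 < Real.sqrt (2 * π) := Real.sqrt_pos.mpr (by positivity)
        have hε0 := hε.1
        rw [pdf_at hgs, abs_of_pos (by positivity), ← ENNReal.ofReal_mul (by positivity), ← ENNReal.ofReal_mul (by positivity)]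
        apply ENNReal.ofReal_le_ofReal
        rw [hfun_eq]
        have h1 : (Iint α (af p f A κ) (af p f A κ 0)).re / Real.sqrt (2 * π) ≤ 1 + ε := by
          rw [div_le_iff₀ hsp]; linarith
        have h1' : 0 ≤ (Iint α (af p f A κ) (af p f A κ 0)).re / Real.sqrt (2 * π) := by
          refine div_nonneg ?_ hsp.le
          have hb2 := (abs_le.mp (Iint_re_bound C hA α hα hε hmin hk1)).1
          nlinarith [hε.2, hsp]
        set S := Real.sqrt (A * Vf p f κ) with hS
        have hSp : 0 < S := Real.sqrt_pos.mpr (by positivity)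
        have hSq : S ^ 2 = A * Vf p f κ := Real.sq_sqrt (by positivity)
        have h2 : S / Mf p f κ ≤ A * κ * Vf p f κ / (Mf p f κ * g κ) := by
          rw [div_le_div_iff₀ hM (by positivity)]
          have h3 : g κ ≤ κ * S := by
            apply le_of_sq_le_sq _ (by positivity)
            rw [hgs, mul_pow, hSq]
            have := C.K_le hk1 hk0.le
            nlinarith
          have h4 : A * κ * Vf p f κ = κ * S ^ 2 := by rw [hSq]; ring
          rw [h4]
          nlinarith [mul_le_mul_of_nonneg_left h3 (mul_pos hSp hM).le]
        calc _ ≤ A * κ * Vf p f κ / (Mf p f κ * g κ) * (Real.exp (-(A * Kf p f κ)) / Real.sqrt (2 * π)) * (1 + ε) := by gcongr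
          _ = _ := by ring
    _ = ENNReal.ofReal (1 + ε) * ∫⁻ x in g '' Ioo κ0 (1 / b), gaussianPDF 0 1 x := by
        rw [lintegral_const_mul' _ _ ENNReal.ofReal_ne_top, hcov]
    _ ≤ _ := by
        gcongr
        rw [gaussianReal_apply 0 one_ne_zero]
        exact lintegral_mono_set himg

lemma lower_neg {m : ℕ} (hm : 1 ≤ m) {p f : Fin (m + 1) → ℝ} {b : ℝ} (C : Ctx p f b) {A : ℝ} (hA : 0 < A)
    (α : Fin (m + 1) → ℝ) (hα : ∀ j, α j = A * p j) (hα0 : 1 ≤ α 0) {ε : ℝ} (hε : ε ∈ Set.Ioo (0 : ℝ) 1)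
    (hmin : c0 / ε ^ 2 ≤ min (α 0) (α (Fin.last m))) {κ0 : ℝ} (h0 : κ0 < 0) :
    ENNReal.ofReal (1 - ε) * gaussianReal 0 1 (Iio (-Real.sqrt (2 * A * Kf p f κ0))) ≤
    dirichlet m (Function.update α 0 (α 0 + 1)) {w | ∑ j, f j * w j ∈ Iio (uf p f κ0)} := by
  have hκ0 : κ0 < 1 / b := h0.trans C.zero_mem
  have hb := C.hb
  have hlt : ∀ κ ∈ Iio κ0, κ < 1 / b := fun κ hκ => lt_trans hκ hκ0
  rw [dirichlet_eq_kappa hm C hA α hα hα0 measurableSet_Iio (measurableSet_Iio (a := κ0)) hlt]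
  swap
  · ext x
    simp only [mem_image, mem_inter_iff, mem_Iio, mem_Ioo]
    constructor
    · rintro ⟨κ, h1, rfl⟩
      have h2 := hlt κ h1
      exact ⟨C.u_mono h2 hκ0 h1, C.u_pos h2, C.u_lt h2⟩
    · rintro ⟨h1, h2, h3⟩
      obtain ⟨κ, hκ, rfl⟩ := C.u_surj h2 h3
      exact ⟨κ, (C.u_mono.lt_iff_lt hκ hκ0).mp h1, rfl⟩
  set g : ℝ → ℝ := fun κ => -Real.sqrt (2 * A * Kf p f κ) with hg
  have hmonoOn : StrictMonoOn g (Iio κ0) := by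
    intro x hx y hy hxy
    have hx : x < κ0 := hx
    have hy : y < κ0 := hy
    have hK := C.K_anti (show x ∈ Iic 0 from (hx.trans h0).le) (show y ∈ Iic 0 from (hy.trans h0).le) hxy
    have hKy := C.K_pos (hlt y hy) (hy.trans h0).ne
    exact neg_lt_neg (Real.sqrt_lt_sqrt (by positivity) (by gcongr))
  have himg : Iio (g κ0) ⊆ g '' Iio κ0 := by
    intro x hx
    have hx : x < g κ0 := hx
    have hK0 := C.K_pos hκ0 h0.ne
    have hs0 : 0 < Real.sqrt (2 * A * Kf p f κ0) := Real.sqrt_pos.mpr (by positivity)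
    have hxn : x < 0 := by simp only [hg] at hx; linarith
    set y := x ^ 2 / (2 * A) with hy
    have hKy : Kf p f κ0 < y := by
      rw [hy, lt_div_iff₀ (by positivity)]
      have h1 : Real.sqrt (2 * A * Kf p f κ0) < -x := by simp only [hg] at hx; linarith
      rw [Real.sqrt_lt' (by linarith)] at h1
      nlinarith
    obtain ⟨κ1, hk1, hky⟩ : ∃ κ1 < κ0, y ≤ Kf p f κ1 := by
      have hpl := C.hp (Fin.last m)
      set L := (y - Real.log (p 0)) / p (Fin.last m) with hL
      refine ⟨min (κ0 - 1) ((1 - Real.exp L) / b), lt_of_le_of_lt (min_le_left _ _) (by linarith), ?_⟩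
      set κ1 := min (κ0 - 1) ((1 - Real.exp L) / b)
      have hneg : κ1 ≤ 0 := (min_le_left _ _).trans (by linarith)
      refine le_trans ?_ (C.K_ge_log hneg)
      have h2 : κ1 * b ≤ 1 - Real.exp L := by
        rw [← le_div_iff₀ hb]; exact min_le_right _ _
      have h3 : L ≤ Real.log (1 - κ1 * b) := by
        rw [Real.le_log_iff_exp_le (by linarith [Real.exp_pos L])]; linarith
      have h4 := mul_le_mul_of_nonneg_left h3 hpl.le
      have h5 : p (Fin.last m) * L = y - Real.log (p 0) := by rw [hL]; field_simp
      linarith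
    have hcont : ContinuousOn (Kf p f) (Icc κ1 κ0) := fun κ hκ =>
      (C.K_deriv (lt_of_le_of_lt hκ.2 hκ0)).continuousAt.continuousWithinAt
    obtain ⟨κ, hκ, hKκ⟩ := intermediate_value_Icc' hk1.le hcont ⟨hKy.le, hky⟩
    refine ⟨κ, lt_of_le_of_ne hκ.2 (fun h => ?_), ?_⟩
    · rw [h] at hKκ; exact hKy.ne hKκ
    · simp only [hg]
      rw [hKκ, hy, mul_div_cancel₀ _ (by positivity), Real.sqrt_sq_eq_abs, abs_of_neg hxn, neg_neg]
  have hcov := lintegral_image_eq_lintegral_abs_deriv_mul (measurableSet_Iio (a := κ0))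
    (fun κ hκ => ((C.g_deriv hA (hlt κ hκ) (lt_trans hκ h0).ne).fun_neg).hasDerivWithinAt) hmonoOn.injOn (gaussianPDF 0 1)
  calc ENNReal.ofReal (1 - ε) * gaussianReal 0 1 (Iio (g κ0))
      ≤ ENNReal.ofReal (1 - ε) * ∫⁻ x in g '' Iio κ0, gaussianPDF 0 1 x := by
        gcongr
        rw [gaussianReal_apply 0 one_ne_zero]
        exact lintegral_mono_set himg
    _ = ∫⁻ κ in Iio κ0, ENNReal.ofReal (1 - ε) * (ENNReal.ofReal |-(A * κ * Vf p f κ / (Mf p f κ * Real.sqrt (2 * A * Kf p f κ)))| * gaussianPDF 0 1 (g κ)) := by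
        rw [lintegral_const_mul' _ _ ENNReal.ofReal_ne_top, hcov]
    _ ≤ _ := by
        refine setLIntegral_mono' measurableSet_Iio fun κ hκ => ?_
        have hk1 := hlt κ hκ
        have hk0 : κ < 0 := lt_trans hκ h0
        have hK := C.K_pos hk1 hk0.ne
        have hM := C.M_pos hk1
        have hV := C.V_pos hk1
        have hgs : g κ ^ 2 = 2 * (A * Kf p f κ) := by
          simp only [hg]; rw [neg_sq, Real.sq_sqrt (by positivity)]; ring
        set t := Real.sqrt (2 * A * Kf p f κ) with ht
        have htp : 0 < t := Real.sqrt_pos.mpr (by positivity)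
        have hts : t ^ 2 = 2 * (A * Kf p f κ) := by rw [← hgs]; simp only [hg, neg_sq]; rfl
        have hb1 := (abs_le.mp (Iint_re_bound C hA α hα hε hmin hk1)).1
        have hsp : 0 < Real.sqrt (2 * π) := Real.sqrt_pos.mpr (by positivity)
        have hε0 : 0 < 1 - ε := by linarith [hε.2]
        have habs : |-(A * κ * Vf p f κ / (Mf p f κ * t))| = A * (-κ) * Vf p f κ / (Mf p f κ * t) := by
          rw [← neg_div, abs_div, abs_of_pos (by positivity : 0 < Mf p f κ * t)]
          congr 1
          rw [abs_of_nonneg]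
          · ring
          · have : 0 ≤ A * (-κ) * Vf p f κ := by have : 0 < -κ := by linarith
                                                 positivity
            linarith
        have hmk : 0 < -κ := by linarith
        rw [pdf_at hgs, habs, ← ENNReal.ofReal_mul (by positivity), ← ENNReal.ofReal_mul (by positivity)]
        apply ENNReal.ofReal_le_ofReal
        rw [hfun_eq]
        have h1 : 1 - ε ≤ (Iint α (af p f A κ) (af p f A κ 0)).re / Real.sqrt (2 * π) := by
          rw [le_div_iff₀ hsp]; linarith
        set S := Real.sqrt (A * Vf p f κ) with hS
        have hSp : 0 < S := Real.sqrt_pos.mpr (by positivity)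
        have hSq : S ^ 2 = A * Vf p f κ := Real.sq_sqrt (by positivity)
        have h2 : A * (-κ) * Vf p f κ / (Mf p f κ * t) ≤ S / Mf p f κ := by
          rw [div_le_div_iff₀ (by positivity) hM]
          have h3 : (-κ) * S ≤ t := by
            apply le_of_sq_le_sq _ (by positivity)
            rw [hts, mul_pow, hSq]
            have := C.K_ge hk1 hk0.le
            nlinarith
          have h4 : A * (-κ) * Vf p f κ = (-κ) * S ^ 2 := by rw [hSq]; ring
          rw [h4]
          nlinarith [mul_le_mul_of_nonneg_left h3 (mul_pos hSp hM).le]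
        calc _ = A * (-κ) * Vf p f κ / (Mf p f κ * t) * (Real.exp (-(A * Kf p f κ)) / Real.sqrt (2 * π)) * (1 - ε) := by ring
          _ ≤ _ := by gcongr


lemma gauss_Iio_le_Ici {g : ℝ} (hg : g ≤ 0) : gaussianReal 0 1 (Iio g) ≤ gaussianReal 0 1 (Ici g) := by
  have h := gaussianReal_map_neg (μ := 0) (v := 1)
  rw [neg_zero] at h
  calc gaussianReal 0 1 (Iio g) = (gaussianReal 0 1).map (fun x => -x) (Iio g) := by rw [h]
    _ = gaussianReal 0 1 ((fun x => -x) ⁻¹' Iio g) := Measure.map_apply measurable_neg measurableSet_Iio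
    _ ≤ _ := by
      apply measure_mono
      intro x hx
      simp only [mem_preimage, mem_Iio] at hx
      simp only [mem_Ici]; linarith

lemma complement_arith {a b c d : ℝ≥0∞} {ε : ℝ} (hε : ε ∈ Set.Ioo (0 : ℝ) 1) (h1 : a + b = 1) (h2 : c + d = 1)
    (hcd : c ≤ d) (h : ENNReal.ofReal (1 - ε) * c ≤ b) : a ≤ ENNReal.ofReal (1 + ε) * d := by
  have hne : ∀ {x y : ℝ≥0∞}, x + y = 1 → x ≠ ⊤ ∧ y ≠ ⊤ := fun {x y} hxy =>
    ENNReal.add_ne_top.mp (by rw [hxy]; exact ENNReal.one_ne_top)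
  obtain ⟨ha, hb⟩ := hne h1
  obtain ⟨hc, hd⟩ := hne h2
  lift a to NNReal using ha
  lift b to NNReal using hb
  lift c to NNReal using hc
  lift d to NNReal using hd
  have e1 : (a : ℝ) + b = 1 := by exact_mod_cast h1
  have e2 : (c : ℝ) + d = 1 := by exact_mod_cast h2
  have e3 : (c : ℝ) ≤ d := by exact_mod_cast hcd
  rw [← ENNReal.ofReal_coe_nnreal, ← ENNReal.ofReal_coe_nnreal, ← ENNReal.ofReal_mul (by linarith [hε.2]),
    ENNReal.ofReal_le_ofReal_iff b.coe_nonneg] at h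
  rw [← ENNReal.ofReal_coe_nnreal, ← ENNReal.ofReal_coe_nnreal, ← ENNReal.ofReal_mul (by linarith [hε.1])]
  apply ENNReal.ofReal_le_ofReal
  nlinarith [hε.1, mul_le_mul_of_nonneg_left e3 hε.1.le]

/-- **Upper bound on Dirichlet boundary-crossing probabilities, all thresholds**
(Corollary 1, upper bound). -/
theorem dirichlet_crossing_upper_all_thresholds
    (m : ℕ) (hm : 1 ≤ m) (b : ℝ) (hb : 0 < b)
    (f : Fin (m + 1) → ℝ) (hf : ∀ i, f i ∈ Set.Icc (0 : ℝ) b)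
    (hf0 : f 0 = 0) (hfm : f (Fin.last m) = b)
    (α : Fin (m + 1) → ℝ) (hα : ∀ i, 0 < α i)
    (ε : ℝ) (hε : ε ∈ Set.Ioo (0 : ℝ) 1)
    (hmin : c0 / ε ^ 2 ≤ min (α 0) (α (Fin.last m)))
    (μ : ℝ) (hμ : μ ∈ Set.Ioo (0 : ℝ) b) :
    dirichlet m (Function.update α 0 (α 0 + 1)) {w | μ ≤ ∑ ℓ, f ℓ * w ℓ}
      ≤ ENNReal.ofReal (1 + ε) *
        gaussianReal 0 1
          {x | Real.sqrt (∑ j, α j) * Afun (fun ℓ => α ℓ / ∑ j, α j) μ f ≤ x} := by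
  have hA : 0 < ∑ j, α j := Finset.sum_pos (fun i _ => hα i) Finset.univ_nonempty
  set A := ∑ j, α j with hAdef
  set p : Fin (m + 1) → ℝ := fun ℓ => α ℓ / A with hp
  have C : Ctx p f b := 
    { hp := fun j => div_pos (hα j) hA
      hs := by simp only [hp]; rw [← Finset.sum_div, ← hAdef, div_self hA.ne']
      hb := hb
      hf := hf
      hf0 := hf0
      hfm := hfm }
  have hαp : ∀ j, α j = A * p j := fun j => by simp only [hp]; field_simp
  have hα0 : 1 ≤ α 0 := by
    have h1 := hmin.trans (min_le_left _ _)
    have h2 : 1 ≤ c0 / ε ^ 2 := by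
      rw [le_div_iff₀ (pow_pos hε.1 2)]
      have := c0_ge
      nlinarith [hε.1, hε.2]
    linarith
  obtain ⟨κ0, hκ0, rfl⟩ := C.u_surj hμ.1 hμ.2
  rw [C.Afun_eq hκ0]
  rcases le_or_gt 0 κ0 with h0 | h0
  · have hset : Real.sqrt A * (Real.sign κ0 * Real.sqrt (2 * Kf p f κ0)) = Real.sqrt (2 * A * Kf p f κ0) := by
      rcases h0.eq_or_lt with h | h
      · rw [← h, Ctx.K_zero]; simp
      · rw [Real.sign_of_pos h, one_mul, ← Real.sqrt_mul hA.le]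
        congr 1; ring
    rw [hset]
    exact upper_pos hm C hA α hαp hα0 hε hmin hκ0 h0
  · have hset : Real.sqrt A * (Real.sign κ0 * Real.sqrt (2 * Kf p f κ0)) = -Real.sqrt (2 * A * Kf p f κ0) := by
      rw [Real.sign_of_neg h0, neg_one_mul, mul_neg, ← Real.sqrt_mul hA.le]
      congr 2; ring
    rw [hset]
    have hlow := lower_neg hm C hA α hαp hα0 hε hmin h0
    set g := -Real.sqrt (2 * A * Kf p f κ0) with hg
    have hgn : g ≤ 0 := neg_nonpos.mpr (Real.sqrt_nonneg _)
    have hms : MeasurableSet {w : Fin (m + 1) → ℝ | uf p f κ0 ≤ ∑ ℓ, f ℓ * w ℓ} :=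
      measurableSet_le measurable_const (by fun_prop)
    refine complement_arith hε ?_ ?_ (gauss_Iio_le_Ici hgn) hlow
    · have hu := dirichlet_univ (m := m) (Function.update α 0 (α 0 + 1)) (fun j => by
        by_cases hj : j = 0
        · subst hj; simp; linarith
        · simp [hj, hα j])
      rw [← hu, ← measure_add_measure_compl hms]
      congr 2
      ext w
      simp
    · rw [← measure_univ (μ := gaussianReal 0 1), ← measure_add_measure_compl (measurableSet_Iio (a := g)), compl_Iio]
      rfl


end
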